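/- arXiv:2302.01306 — 9 statements merged into one kernel-verified Lean document; each statement's English description precedes it below -/
import Mathlib

section
/- Let G1 and G2 be two vertex-disjoint finite graphs (each with at least one vertex). Then the z-chromatic number of the disjoint union satisfies z(G1 ∪ G2) = max{z(G1), z(G2)}. -/
open SimpleGraph

universe u v

/-- `c` is a z-coloring of `G` using exactly the `k` colors `0, …, k-1`:
it is proper, every color class is nonempty, every vertex of color `j` has a
neighbor of each color `i < j` (Grundy property), and there are vertices
`u 0, …, u (k-1)` with `u j` of color `j`, such that `u (k-1)` is adjacent to
every other `u j`, and each `u j` has a neighbor of every color `i ≠ j`. -/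
def IsZColoring {V : Type u} (G : SimpleGraph V) (k : ℕ) (c : V → ℕ) : Prop :=
  (∀ v, c v < k) ∧
  (∀ ⦃x y : V⦄, G.Adj x y → c x ≠ c y) ∧
  (∀ i, i < k → ∃ v, c v = i) ∧
  (∀ v : V, ∀ i, i < c v → ∃ w, G.Adj v w ∧ c w = i) ∧
  (∃ u : ℕ → V,
    (∀ j, j < k → c (u j) = j) ∧
    (∀ j, j < k - 1 → G.Adj (u (k - 1)) (u j)) ∧
    (∀ i, i < k → ∀ j, j < k → i ≠ j → ∃ w, G.Adj (u j) w ∧ c w = i))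

/-- The z-chromatic number: the maximum number of colors in a z-coloring. -/
noncomputable def zNum {V : Type u} (G : SimpleGraph V) : ℕ :=
  sSup {k | ∃ c : V → ℕ, IsZColoring G k c}

/-- `c` is a Grundy coloring of `G` using exactly the `k` colors `0, …, k-1`. -/
def IsGrundyColoring {V : Type u} (G : SimpleGraph V) (k : ℕ) (c : V → ℕ) : Prop :=
  (∀ v, c v < k) ∧
  (∀ ⦃x y : V⦄, G.Adj x y → c x ≠ c y) ∧
  (∀ i, i < k → ∃ v, c v = i) ∧
  (∀ v : V, ∀ i, i < c v → ∃ w, G.Adj v w ∧ c w = i)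

/-- The Grundy number: the maximum number of colors in a Grundy coloring. -/
noncomputable def grundyNum {V : Type u} (G : SimpleGraph V) : ℕ :=
  sSup {k | ∃ c : V → ℕ, IsGrundyColoring G k c}

/-- `c` is a b-coloring of `G` using exactly the `k` colors `0, …, k-1`:
proper, and every color class contains a vertex adjacent to a vertex of every
other color class. -/
def IsBColoring {V : Type u} (G : SimpleGraph V) (k : ℕ) (c : V → ℕ) : Prop :=
  (∀ v, c v < k) ∧
  (∀ ⦃x y : V⦄, G.Adj x y → c x ≠ c y) ∧
  (∀ i, i < k → ∃ v, c v = i ∧ ∀ j, j < k → j ≠ i → ∃ w, G.Adj v w ∧ c w = j)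

/-- The b-chromatic number: the maximum number of colors in a b-coloring. -/
noncomputable def bNum {V : Type u} (G : SimpleGraph V) : ℕ :=
  sSup {k | ∃ c : V → ℕ, IsBColoring G k c}

/-- The chromatic number, as a natural number. -/
noncomputable def chromNum {V : Type u} (G : SimpleGraph V) : ℕ :=
  sInf {k | G.Colorable k}

/-- The maximum degree of a graph (degree measured by `Set.ncard` of the
neighbor set), as the supremum of all achieved degrees. -/
noncomputable def maxDeg {V : Type u} (G : SimpleGraph V) : ℕ :=
  sSup {d | ∃ v : V, (G.neighborSet v).ncard = d}

/-- The disjoint union `G1 ∪ G2` of two vertex-disjoint graphs, on the sum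
type: its edges are exactly the edges of `G1` together with those of `G2`. -/
def unionG {V1 : Type u} {V2 : Type v} (G1 : SimpleGraph V1) (G2 : SimpleGraph V2) :
    SimpleGraph (V1 ⊕ V2) :=
  SimpleGraph.fromRel (fun x y =>
    (∃ a b, x = Sum.inl a ∧ y = Sum.inl b ∧ G1.Adj a b) ∨
    (∃ a b, x = Sum.inr a ∧ y = Sum.inr b ∧ G2.Adj a b))

theorem exists_zcol {V : Type u} [Fintype V] [Nonempty V] (G : SimpleGraph V) :
    ∃ k, ∃ c : V → ℕ, IsZColoring G k c := by
  classical
  let P : ℕ → (V → ℕ) → Prop := fun k c => (∀ x y, G.Adj x y → c x ≠ c y) ∧ ∀ v, c v < k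
  have hex : ∃ k, ∃ c, P k c := by
    refine ⟨Fintype.card V, fun v => (Fintype.equivFin V v : ℕ), ?_, fun v => (Fintype.equivFin V v).2⟩
    intro x y h he
    exact h.ne ((Fintype.equivFin V).injective (Fin.ext he))
  obtain ⟨k, hk, hmin⟩ : ∃ k, (∃ c, P k c) ∧ ∀ m, m < k → ¬ ∃ c, P m c :=
    ⟨Nat.find hex, Nat.find_spec hex, fun m hm => Nat.find_min hex hm⟩
  have hk1 : 0 < k := by
    obtain ⟨c, hc⟩ := hk
    have := hc.2 (Classical.arbitrary V)
    omega
  let T : (V → ℕ) → Finset V := fun c => Finset.univ.filter (fun v => c v = k - 1)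
  obtain ⟨c, hc, hcm⟩ := (InvImage.wf (fun c : V → ℕ => toLex ((T c).card, ∑ v, c v))
    wellFounded_lt).has_min {c | P k c} hk
  obtain ⟨hp, hlt⟩ : P k c := hc
  have hcm1 : ∀ c', P k c' → ¬ (T c').card < (T c).card := by
    intro c' h h2
    exact hcm c' h (Prod.Lex.toLex_lt_toLex.2 (Or.inl h2))
  have hcm2 : ∀ c', P k c' → T c' ⊆ T c → ¬ (∑ v, c' v < ∑ v, c v) := by
    intro c' h h2 h3
    rcases (Finset.card_le_card h2).lt_or_eq with h4 | h4
    · exact hcm1 c' h h4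
    · exact hcm c' h (Prod.Lex.toLex_lt_toLex.2 (Or.inr ⟨h4, h3⟩))
  have hA : ∀ v : V, ∀ i, i < c v → ∃ w, G.Adj v w ∧ c w = i := by
    intro v i hi
    by_contra hno
    push Not at hno
    have hv := hlt v
    refine hcm2 (Function.update c v i) ⟨?_, ?_⟩ ?_ ?_
    · intro x y hxy
      have hne := hxy.ne
      by_cases hx : x = v
      · subst hx
        rw [Function.update_self, Function.update_of_ne hne.symm]
        exact (hno y hxy).symm
      · by_cases hy : y = v
        · subst hy
          rw [Function.update_self, Function.update_of_ne hne]
          exact hno x hxy.symm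
        · rw [Function.update_of_ne hx, Function.update_of_ne hy]
          exact hp x y hxy
    · intro x
      by_cases hx : x = v
      · subst hx
        rw [Function.update_self]; omega
      · rw [Function.update_of_ne hx]; exact hlt x
    · intro x hx
      simp only [T, Finset.mem_filter, Finset.mem_univ, true_and] at hx ⊢
      by_cases hxv : x = v
      · subst hxv
        rw [Function.update_self] at hx; omega
      · rwa [Function.update_of_ne hxv] at hx
    · apply Finset.sum_lt_sum
      · intro x _
        by_cases hx : x = v
        · subst hx
          rw [Function.update_self]; omega
        · rw [Function.update_of_ne hx]
      · exact ⟨v, Finset.mem_univ _, by rw [Function.update_self]; exact hi⟩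
  obtain ⟨v, hv⟩ : ∃ v, c v = k - 1 := by
    by_contra hno
    push Not at hno
    refine hmin (k - 1) (by omega) ⟨c, hp, fun v => ?_⟩
    have := hlt v
    have := hno v
    omega
  have hC : ∀ j, j < k - 1 → ∃ w, G.Adj v w ∧ c w = j ∧
      ∀ i, i < k → i ≠ j → ∃ x, G.Adj w x ∧ c x = i := by
    intro j hj
    by_contra hno
    push Not at hno
    choose! f hf using hno
    have hft : ∀ w, G.Adj v w → c w = j → f w ≠ k - 1 := by
      intro w h1 h2 h3
      exact (hf w h1 h2).2.2 v h1.symm (by rw [hv, h3])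
    let c' : V → ℕ := fun x => if x = v then j else if G.Adj v x ∧ c x = j then f x else c x
    have hP : P k c' := by
      constructor
      · intro x y hxy
        have hne := hxy.ne
        have h0 := hp x y hxy
        have h1 := hf x
        have h2 := hf y
        have hyx := hxy.symm
        simp only [c']
        split_ifs <;> grind
      · intro x
        have h1 := hf x
        have := hlt x
        simp only [c']
        split_ifs <;> grind
    refine hcm1 c' hP (Finset.card_lt_card (Finset.ssubset_iff_of_subset ?_ |>.2 ⟨v, ?_, ?_⟩))
    · intro x hx
      have := hft x
      simp only [T, c', Finset.mem_filter, Finset.mem_univ, true_and] at hx ⊢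
      split_ifs at hx <;> grind
    · simp [T, hv]
    · simp [T, c']; omega
  choose! g hg using hC
  refine ⟨k, c, hlt, hp, ?_, hA, fun j => if j = k - 1 then v else g j, ?_, ?_, ?_⟩
  · intro i hi
    by_cases h : i = k - 1
    · exact ⟨v, by rw [hv, h]⟩
    · obtain ⟨w, _, hw⟩ := hA v i (by omega)
      exact ⟨w, hw⟩
  · intro j hj
    by_cases h : j = k - 1
    · simp [h, hv]
    · simp only [h, if_false]
      exact (hg j (by omega)).2.1
  · intro j hj
    simp only [if_true, hj.ne, if_false]
    exact (hg j hj).1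
  · intro i hi j hj hij
    by_cases h : j = k - 1
    · simp only [h, if_true]
      exact hA v i (by omega)
    · simp only [h, if_false]
      exact (hg j (by omega)).2.2 i hi hij

theorem zcol_bdd {V : Type u} [Fintype V] (G : SimpleGraph V) :
    BddAbove {k | ∃ c : V → ℕ, IsZColoring G k c} := by
  classical
  refine ⟨Fintype.card V, ?_⟩
  rintro k ⟨c, _, _, h, _⟩
  have : Finset.range k ⊆ Finset.univ.image c := by
    intro i hi
    obtain ⟨v, hv⟩ := h i (Finset.mem_range.1 hi)
    exact Finset.mem_image.2 ⟨v, Finset.mem_univ _, hv⟩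
  have h2 := (Finset.card_le_card this).trans Finset.card_image_le
  simpa using h2

section
variable {V1 : Type u} {V2 : Type v} (G1 : SimpleGraph V1) (G2 : SimpleGraph V2)

theorem unionG_ll (a b : V1) : (unionG G1 G2).Adj (Sum.inl a) (Sum.inl b) ↔ G1.Adj a b := by
  simp only [unionG, SimpleGraph.fromRel_adj]
  have := G1.adj_comm a b
  have := @SimpleGraph.Adj.ne _ G1 a b
  simp; grind
theorem unionG_rr (a b : V2) : (unionG G1 G2).Adj (Sum.inr a) (Sum.inr b) ↔ G2.Adj a b := by
  simp only [unionG, SimpleGraph.fromRel_adj]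
  have := G2.adj_comm a b
  have := @SimpleGraph.Adj.ne _ G2 a b
  simp; grind
theorem unionG_lr (a : V1) (b : V2) : ¬ (unionG G1 G2).Adj (Sum.inl a) (Sum.inr b) := by
  simp [unionG, SimpleGraph.fromRel_adj]
theorem unionG_rl (a : V1) (b : V2) : ¬ (unionG G1 G2).Adj (Sum.inr b) (Sum.inl a) := by
  simp [unionG, SimpleGraph.fromRel_adj]

/-- The union of two z-colorings. -/
theorem zcol_join {k1 k2 : ℕ} {c1 : V1 → ℕ} {c2 : V2 → ℕ} (h1 : IsZColoring G1 k1 c1)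
    (h2 : IsZColoring G2 k2 c2) : IsZColoring (unionG G1 G2) (max k1 k2) (Sum.elim c1 c2) := by
  obtain ⟨a1, b1, d1, e1, u1, f1, g1, i1⟩ := h1
  obtain ⟨a2, b2, d2, e2, u2, f2, g2, i2⟩ := h2
  refine ⟨?_, ?_, ?_, ?_, ?_⟩
  · rintro (x | x)
    · exact lt_max_of_lt_left (a1 x)
    · exact lt_max_of_lt_right (a2 x)
  · rintro (x | x) (y | y) h
    · exact b1 ((unionG_ll ..).1 h)
    · exact (unionG_lr _ _ _ _ h).elim
    · exact (unionG_rl _ _ _ _ h).elim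
    · exact b2 ((unionG_rr ..).1 h)
  · intro i hi
    rcases lt_max_iff.1 hi with h | h
    · obtain ⟨x, hx⟩ := d1 i h
      exact ⟨Sum.inl x, hx⟩
    · obtain ⟨x, hx⟩ := d2 i h
      exact ⟨Sum.inr x, hx⟩
  · rintro (x | x) i hi
    · obtain ⟨w, hw, hc⟩ := e1 x i hi
      exact ⟨Sum.inl w, (unionG_ll ..).2 hw, hc⟩
    · obtain ⟨w, hw, hc⟩ := e2 x i hi
      exact ⟨Sum.inr w, (unionG_rr ..).2 hw, hc⟩
  · rcases le_total k2 k1 with h | h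
    · rw [max_eq_left h]
      refine ⟨fun j => Sum.inl (u1 j), f1, fun j hj => (unionG_ll ..).2 (g1 j hj), ?_⟩
      intro i hi j hj hij
      obtain ⟨w, hw, hc⟩ := i1 i hi j hj hij
      exact ⟨Sum.inl w, (unionG_ll ..).2 hw, hc⟩
    · rw [max_eq_right h]
      refine ⟨fun j => Sum.inr (u2 j), f2, fun j hj => (unionG_rr ..).2 (g2 j hj), ?_⟩
      intro i hi j hj hij
      obtain ⟨w, hw, hc⟩ := i2 i hi j hj hij
      exact ⟨Sum.inr w, (unionG_rr ..).2 hw, hc⟩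

/-- A z-coloring of the union restricts to one of the parts. -/
theorem zcol_split [Nonempty V1] {k : ℕ} {c : V1 ⊕ V2 → ℕ} (h : IsZColoring (unionG G1 G2) k c) :
    (∃ c, IsZColoring G1 k c) ∨ (∃ c, IsZColoring G2 k c) := by
  obtain ⟨a, b, d, e, u, f, g, l⟩ := h
  have hk : 0 < k := (Nat.zero_le _).trans_lt (a (Sum.inl (Classical.arbitrary V1)))
  rcases hu : u (k - 1) with x | x
  · left
    have hall : ∀ j, ∃ y, j < k → u j = Sum.inl y := by
      intro j
      by_cases hj : j < k
      · rcases hy : u j with y | y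
        · exact ⟨y, fun _ => rfl⟩
        · exfalso
          have hne : j ≠ k - 1 := by
            rintro rfl
            rw [hu] at hy; cases hy
          have := g j (by omega)
          rw [hu, hy] at this
          exact unionG_lr _ _ _ _ this
      · exact ⟨x, fun h => (hj h).elim⟩
    choose w hw using hall
    refine ⟨fun y => c (Sum.inl y), fun y => a _, fun y z h => b ((unionG_ll ..).2 h), ?_, ?_, w,
      ?_, ?_, ?_⟩
    · intro i hi
      exact ⟨w i, by beta_reduce; rw [← hw i hi]; exact f i hi⟩
    · intro y i hi
      obtain ⟨z | z, hz, hc⟩ := e _ i hi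
      · exact ⟨z, (unionG_ll ..).1 hz, hc⟩
      · exact (unionG_lr _ _ _ _ hz).elim
    · intro j hj
      beta_reduce; rw [← hw j hj]; exact f j hj
    · intro j hj
      have := g j hj
      rw [hw _ (by omega), hw j (by omega)] at this
      exact (unionG_ll ..).1 this
    · intro i hi j hj hij
      obtain ⟨z, hz, hc⟩ := l i hi j hj hij
      rw [hw j hj] at hz
      rcases z with z | z
      · exact ⟨z, (unionG_ll ..).1 hz, hc⟩
      · exact (unionG_lr _ _ _ _ hz).elim
  · right
    have hall : ∀ j, ∃ y, j < k → u j = Sum.inr y := by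
      intro j
      by_cases hj : j < k
      · rcases hy : u j with y | y
        · exfalso
          have hne : j ≠ k - 1 := by
            rintro rfl
            rw [hu] at hy; cases hy
          have := g j (by omega)
          rw [hu, hy] at this
          exact unionG_rl _ _ _ _ this
        · exact ⟨y, fun _ => rfl⟩
      · exact ⟨x, fun h => (hj h).elim⟩
    choose w hw using hall
    refine ⟨fun y => c (Sum.inr y), fun y => a _, fun y z h => b ((unionG_rr ..).2 h), ?_, ?_, w,
      ?_, ?_, ?_⟩
    · intro i hi
      exact ⟨w i, by beta_reduce; rw [← hw i hi]; exact f i hi⟩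
    · intro y i hi
      obtain ⟨z | z, hz, hc⟩ := e _ i hi
      · exact (unionG_rl _ _ _ _ hz).elim
      · exact ⟨z, (unionG_rr ..).1 hz, hc⟩
    · intro j hj
      beta_reduce; rw [← hw j hj]; exact f j hj
    · intro j hj
      have := g j hj
      rw [hw _ (by omega), hw j (by omega)] at this
      exact (unionG_rr ..).1 this
    · intro i hi j hj hij
      obtain ⟨z, hz, hc⟩ := l i hi j hj hij
      rw [hw j hj] at hz
      rcases z with z | z
      · exact (unionG_rl _ _ _ _ hz).elim
      · exact ⟨z, (unionG_rr ..).1 hz, hc⟩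

end

/-- for vertex-disjoint finite graphs `G1`, `G2`, each with at
least one vertex, `z(G1 ∪ G2) = max {z(G1), z(G2)}`. -/
theorem zNum_union {V1 : Type u} {V2 : Type v} [Fintype V1] [Fintype V2]
    [Nonempty V1] [Nonempty V2] (G1 : SimpleGraph V1) (G2 : SimpleGraph V2) :
    zNum (unionG G1 G2) = max (zNum G1) (zNum G2) := by
  obtain ⟨c1, h1⟩ := Nat.sSup_mem (exists_zcol G1) (zcol_bdd G1)
  obtain ⟨c2, h2⟩ := Nat.sSup_mem (exists_zcol G2) (zcol_bdd G2)
  apply le_antisymm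
  · obtain ⟨c, h⟩ := Nat.sSup_mem (exists_zcol (unionG G1 G2)) (zcol_bdd (unionG G1 G2))
    rcases zcol_split G1 G2 h with h | h
    · exact le_max_of_le_left (le_csSup (zcol_bdd G1) h)
    · exact le_max_of_le_right (le_csSup (zcol_bdd G2) h)
  · exact le_csSup (zcol_bdd (unionG G1 G2)) ⟨_, zcol_join G1 G2 h1 h2⟩
end

section
/- For every integer n ≥ 3, the graph G_n satisfies Γ(G_n) = 2n − 1, where Γ denotes the Grundy number. (Moreover Δ(G_n) = 2n − 2, so this attains the upper bound Γ(G_n) ≤ Δ(G_n) + 1.) -/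
open SimpleGraph

universe u v

/-- Vertex set of the graph `Gₙ`: for each `i : Fin n` we have the core vertex
`(i, Sum.inl ())` (this is `vᵢ = vₙⁱ`), the `n-1` further clique vertices
`(i, Sum.inr (Sum.inl j))` of `K(vᵢ)` (with `j = 0` being `v₁ⁱ`), and the
`n-1` pendant leaves `(i, Sum.inr (Sum.inr l))` attached to `v₁ⁱ`. -/
abbrev GnVert (n : ℕ) : Type := Fin n × (Unit ⊕ (Fin (n - 1) ⊕ Fin (n - 1)))

/-- The graph `Gₙ`: a complete graph `Kₙ` on the core vertices `v₁, …, vₙ`;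
for each `i` a complete graph `K(vᵢ)` on `n` vertices containing `vᵢ`;
and `n - 1` pendant leaves attached to the vertex `v₁ⁱ` of each `K(vᵢ)`. -/
def Gn (n : ℕ) : SimpleGraph (GnVert n) :=
  SimpleGraph.fromRel (fun x y =>
    -- the central clique on the `n` core vertices
    (x.1 ≠ y.1 ∧ x.2 = Sum.inl () ∧ y.2 = Sum.inl ()) ∨
    -- the clique `K(vᵢ)` on the core vertex together with the `n-1` others
    (x.1 = y.1 ∧
      (x.2 = Sum.inl () ∨ ∃ j, x.2 = Sum.inr (Sum.inl j)) ∧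
      (y.2 = Sum.inl () ∨ ∃ j, y.2 = Sum.inr (Sum.inl j))) ∨
    -- the pendant leaves attached to `v₁ⁱ`
    (x.1 = y.1 ∧ (∃ j : Fin (n - 1), x.2 = Sum.inr (Sum.inl j) ∧ (j : ℕ) = 0) ∧
      (∃ l, y.2 = Sum.inr (Sum.inr l))))

theorem aux_core_nbr (n : ℕ) (i : Fin n) :
    (Gn n).neighborSet (i, Sum.inl ()) =
      ((fun i' : Fin n => ((i', Sum.inl ()) : GnVert n)) '' {i}ᶜ) ∪
        Set.range (fun j => ((i, Sum.inr (Sum.inl j)) : GnVert n)) := by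
  ext ⟨a, b⟩
  rcases b with _ | b | b <;>
    simp [Gn, SimpleGraph.fromRel_adj] <;> grind

theorem aux_core_deg (n : ℕ) (hn : 3 ≤ n) (i : Fin n) :
    ((Gn n).neighborSet (i, Sum.inl ())).ncard = 2 * n - 2 := by
  rw [aux_core_nbr, Set.ncard_union_eq, Set.ncard_image_of_injective, Set.ncard_compl,
    ← Set.image_univ, Set.ncard_image_of_injective, Set.ncard_univ]
  · simp; omega
  · intro a b h; simpa using h
  · intro a b h; simpa using h
  · rw [Set.disjoint_left]
    rintro _ ⟨a, _, rfl⟩ ⟨b, hb⟩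
    simp at hb

theorem aux_deg_le (n : ℕ) (hn : 3 ≤ n) (v : GnVert n) :
    ((Gn n).neighborSet v).ncard ≤ 2 * n - 2 := by
  obtain ⟨i, b⟩ := v
  rcases b with b | b
  · exact (aux_core_deg n hn i).le
  · have hs : (Gn n).neighborSet (i, Sum.inr b) ⊆
        (fun x => ((i, x) : GnVert n)) '' {Sum.inr b}ᶜ := by
      rintro ⟨a, d⟩ h
      simp [Gn, SimpleGraph.fromRel_adj] at h ⊢
      grind
    refine (Set.ncard_le_ncard hs (Set.toFinite _)).trans ?_
    rw [Set.ncard_image_of_injective, Set.ncard_compl]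
    · simp; omega
    · intro a b h; simpa using h

theorem aux_upper (n : ℕ) (hn : 3 ≤ n) (k : ℕ)
    (h : ∃ c, IsGrundyColoring (Gn n) k c) : k ≤ 2 * n - 1 := by
  obtain ⟨c, hlt, hp, hne, hg⟩ := h
  rcases Nat.eq_zero_or_pos k with rfl | hk
  · omega
  obtain ⟨v, hv⟩ := hne (k - 1) (by omega)
  have hs : Set.Iio (k - 1) ⊆ c '' (Gn n).neighborSet v := by
    intro i hi
    obtain ⟨w, hw, hc⟩ := hg v i (by rw [hv]; exact hi)
    exact ⟨w, hw, hc⟩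
  have h1 := Set.ncard_le_ncard hs (Set.toFinite _)
  have h2 := Set.ncard_image_le (f := c) (Set.toFinite ((Gn n).neighborSet v))
  have h3 := aux_deg_le n hn v
  have h4 : (Set.Iio (k - 1)).ncard = k - 1 := by
    rw [← Finset.coe_Iio, Set.ncard_coe_finset]; simp
  omega

def auxCol (n : ℕ) : GnVert n → ℕ
  | (i, Sum.inl _) => n - 1 + i
  | (_, Sum.inr (Sum.inl j)) => j
  | (_, Sum.inr (Sum.inr _)) => 1

theorem aux_exists (n : ℕ) (hn : 3 ≤ n) :
    IsGrundyColoring (Gn n) (2 * n - 1) (auxCol n) := by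
  refine ⟨?_, ?_, ?_, ?_⟩
  · rintro ⟨i, _ | j | l⟩ <;> simp only [auxCol] <;> omega
  · rintro ⟨a, _ | x | x⟩ ⟨b, _ | y | y⟩ h <;>
      simp [Gn, SimpleGraph.fromRel_adj] at h <;> simp only [auxCol] <;> grind
  · intro i hi
    by_cases h : i < n - 1
    · exact ⟨(⟨0, by omega⟩, Sum.inr (Sum.inl ⟨i, h⟩)), rfl⟩
    · exact ⟨(⟨i - (n - 1), by omega⟩, Sum.inl ()), by simp only [auxCol]; omega⟩
  · rintro ⟨a, _ | x | x⟩ i hi <;> simp only [auxCol] at hi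
    · by_cases h : i < n - 1
      · exact ⟨(a, Sum.inr (Sum.inl ⟨i, h⟩)), by simp [Gn, SimpleGraph.fromRel_adj], rfl⟩
      · refine ⟨(⟨i - (n - 1), by omega⟩, Sum.inl ()), ?_, by simp only [auxCol]; omega⟩
        simp [Gn, SimpleGraph.fromRel_adj, Fin.ext_iff]
        omega
    · refine ⟨(a, Sum.inr (Sum.inl ⟨i, by omega⟩)), ?_, rfl⟩
      simp [Gn, SimpleGraph.fromRel_adj, Fin.ext_iff]
      exact ⟨by omega, ⟨i, by omega⟩, rfl⟩
    · refine ⟨(a, Sum.inr (Sum.inl ⟨0, by omega⟩)), ?_, by simp only [auxCol]; omega⟩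
      simp [Gn, SimpleGraph.fromRel_adj]

/-- for every `n ≥ 3`, the Grundy number of `Gₙ` is `2n - 1`;
moreover `Δ(Gₙ) = 2n - 2`, so this attains the bound `Γ(G) ≤ Δ(G) + 1`. -/
theorem grundyNum_Gn (n : ℕ) (hn : 3 ≤ n) :
    grundyNum (Gn n) = 2 * n - 1 ∧ maxDeg (Gn n) = 2 * n - 2 := by
  constructor
  · have : IsGreatest {k | ∃ c, IsGrundyColoring (Gn n) k c} (2 * n - 1) :=
      ⟨⟨_, aux_exists n hn⟩, fun k hk => aux_upper n hn k hk⟩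
    exact this.csSup_eq
  · have : IsGreatest {d | ∃ v, ((Gn n).neighborSet v).ncard = d} (2 * n - 2) :=
      ⟨⟨_, aux_core_deg n hn ⟨0, by omega⟩⟩, by rintro d ⟨v, rfl⟩; exact aux_deg_le n hn v⟩
    exact this.csSup_eq
end

section
/- For every integer n ≥ 3, the graph G_n satisfies b(G_n) = 2n − 1, where b denotes the b-chromatic number. (Moreover Δ(G_n) = 2n − 2, so this attains the upper bound b(G_n) ≤ Δ(G_n) + 1.) -/
open SimpleGraph

universe u v

/-- The explicit coloring. -/
def cG (n : ℕ) : GnVert n → ℕ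
  | (i, Sum.inl _) => i
  | (i, Sum.inr (Sum.inl j)) =>
      n + (if (i : ℕ) + j < n - 1 then (i : ℕ) + j else (i : ℕ) + j - (n - 1))
  | (i, Sum.inr (Sum.inr l)) => if (l : ℕ) < i then (l : ℕ) else l + 1

lemma cG_lt (n : ℕ) (hn : 3 ≤ n) (x : GnVert n) : cG n x < 2 * n - 1 := by
  obtain ⟨i, (u | j | l)⟩ := x <;> simp only [cG] <;> (try split_ifs) <;> omega

lemma adj_cc {u u' : Unit} (n : ℕ) (i i' : Fin n) :
    (Gn n).Adj (i, Sum.inl u) (i', Sum.inl u') ↔ (i : ℕ) ≠ i' := by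
  simp [Gn, Fin.ext_iff]; omega

lemma adj_cq {u : Unit} (n : ℕ) (i i' : Fin n) (j) :
    (Gn n).Adj (i, Sum.inl u) (i', Sum.inr (Sum.inl j)) ↔ (i : ℕ) = i' := by
  simp [Gn, Fin.ext_iff]; omega

lemma adj_cl {u : Unit} (n : ℕ) (i i' : Fin n) (l) :
    ¬ (Gn n).Adj (i, Sum.inl u) (i', Sum.inr (Sum.inr l)) := by
  simp [Gn]

lemma adj_qq (n : ℕ) (i i' : Fin n) (j j') :
    (Gn n).Adj (i, Sum.inr (Sum.inl j)) (i', Sum.inr (Sum.inl j')) ↔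
      (i : ℕ) = i' ∧ (j : ℕ) ≠ j' := by
  simp [Gn, Fin.ext_iff]; omega

lemma adj_ql (n : ℕ) (i i' : Fin n) (j l) :
    (Gn n).Adj (i, Sum.inr (Sum.inl j)) (i', Sum.inr (Sum.inr l)) ↔
      (i : ℕ) = i' ∧ (j : ℕ) = 0 := by
  simp only [Gn, Fin.ext_iff, SimpleGraph.fromRel_adj]
  simp

lemma adj_ll (n : ℕ) (i i' : Fin n) (j l) :
    ¬ (Gn n).Adj (i, Sum.inr (Sum.inr j)) (i', Sum.inr (Sum.inr l)) := by
  simp [Gn]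

lemma adj_qc {u : Unit} (n : ℕ) (i i' : Fin n) (j) :
    (Gn n).Adj (i', Sum.inr (Sum.inl j)) (i, Sum.inl u) ↔ (i : ℕ) = i' := by
  rw [SimpleGraph.adj_comm, adj_cq]

lemma adj_lc {u : Unit} (n : ℕ) (i i' : Fin n) (l) :
    ¬ (Gn n).Adj (i', Sum.inr (Sum.inr l)) (i, Sum.inl u) := by
  rw [SimpleGraph.adj_comm]; exact adj_cl n i i' l

lemma adj_lq (n : ℕ) (i i' : Fin n) (j l) :
    (Gn n).Adj (i', Sum.inr (Sum.inr l)) (i, Sum.inr (Sum.inl j)) ↔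
      (i : ℕ) = i' ∧ (j : ℕ) = 0 := by
  rw [SimpleGraph.adj_comm, adj_ql]

lemma cG_proper (n : ℕ) (hn : 3 ≤ n) (x y : GnVert n) (h : (Gn n).Adj x y) :
    cG n x ≠ cG n y := by
  obtain ⟨i, (u | j | l)⟩ := x <;> obtain ⟨i', (u | j' | l')⟩ := y <;>
    simp only [adj_cc, adj_cq, adj_cl, adj_qq, adj_ql, adj_ll, adj_qc, adj_lc, adj_lq] at h <;>
    simp only [cG] <;> (try split_ifs) <;> omega

lemma cG_inj (n : ℕ) (hn : 3 ≤ n) (x y z : GnVert n) (h : (Gn n).Adj x y) (h' : (Gn n).Adj x z)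
    (hc : cG n y = cG n z) : y = z := by
  obtain ⟨i, (u | j | l)⟩ := x <;> obtain ⟨i', (u | j' | l')⟩ := y <;>
  obtain ⟨i'', (u | j'' | l'')⟩ := z <;>
    simp only [adj_cc, adj_cq, adj_cl, adj_qq, adj_ql, adj_ll, adj_qc, adj_lc, adj_lq] at h h' <;>
    simp only [cG] at hc <;>
    simp only [Prod.mk.injEq, Sum.inl.injEq, Sum.inr.injEq, Fin.ext_iff, reduceCtorEq, and_true,
      and_false] <;> (try simp only [true_and]) <;> (try split_ifs at hc) <;> omega

lemma cG_isB (n : ℕ) (hn : 3 ≤ n) : IsBColoring (Gn n) (2 * n - 1) (cG n) := by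
  refine ⟨cG_lt n hn, fun x y => cG_proper n hn x y, fun k hk => ?_⟩
  by_cases hkn : k < n
  · refine ⟨(⟨k, hkn⟩, Sum.inl ()), rfl, fun j hj hjk => ?_⟩
    by_cases hjn : j < n
    · exact ⟨(⟨j, hjn⟩, Sum.inl ()), (adj_cc _ _ _).2 (by simp; omega), rfl⟩
    · refine ⟨(⟨k, hkn⟩, Sum.inr (Sum.inl ⟨if k ≤ j - n then j - n - k else
        j - n + (n - 1) - k, ?_⟩)), (adj_cq _ _ _ _).2 rfl, ?_⟩
      · split_ifs <;> omega
      · simp only [cG]; split_ifs <;> omega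
  · refine ⟨(⟨k - n, by omega⟩, Sum.inr (Sum.inl ⟨0, by omega⟩)), ?_, fun j hj hjk => ?_⟩
    · simp only [cG]; split_ifs <;> omega
    by_cases hjn : j < n
    · by_cases hjk' : j = k - n
      · exact ⟨(⟨k - n, by omega⟩, Sum.inl ()), (adj_qc _ _ _ _).2 rfl, hjk'.symm⟩
      · refine ⟨(⟨k - n, by omega⟩, Sum.inr (Sum.inr ⟨if j < k - n then j else j - 1, ?_⟩)),
          (adj_ql _ _ _ _ _).2 ⟨rfl, rfl⟩, ?_⟩
        · split_ifs <;> omega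
        · simp only [cG]; split_ifs <;> omega
    · refine ⟨(⟨k - n, by omega⟩, Sum.inr (Sum.inl ⟨if k - n ≤ j - n then j - n - (k - n) else
        j - n + (n - 1) - (k - n), ?_⟩)), (adj_qq _ _ _ _ _).2 ⟨rfl, ?_⟩, ?_⟩
      · split_ifs <;> omega
      · simp only; split_ifs <;> omega
      · simp only [cG]; split_ifs <;> omega

lemma deg_le (n : ℕ) (hn : 3 ≤ n) (x : GnVert n) : ((Gn n).neighborSet x).ncard ≤ 2 * n - 2 := by
  have h := Set.ncard_le_ncard_of_injOn (s := (Gn n).neighborSet x)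
    (t := (((Finset.range (2 * n - 1)).erase (cG n x) : Finset ℕ) : Set ℕ)) (cG n)
    (fun y hy => by
      simp only [Finset.coe_erase, Finset.coe_range, Set.mem_sdiff, Set.mem_Iio,
        Set.mem_singleton_iff]
      exact ⟨cG_lt n hn y, (cG_proper n hn x y hy).symm⟩)
    (fun y hy z hz hyz => cG_inj n hn x y z hy hz hyz) (Finset.finite_toSet _)
  rw [Set.ncard_coe_finset, Finset.card_erase_of_mem (Finset.mem_range.2 (cG_lt n hn x)),
    Finset.card_range] at h
  omega

lemma le_deg (n : ℕ) (k : ℕ) (hk : 0 < k) (c : GnVert n → ℕ) (h : IsBColoring (Gn n) k c) :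
    ∃ v, k - 1 ≤ ((Gn n).neighborSet v).ncard := by
  obtain ⟨v, hv, hw⟩ := h.2.2 0 hk
  refine ⟨v, ?_⟩
  have h1 : (((Finset.range k).erase 0 : Finset ℕ) : Set ℕ) ⊆ c '' (Gn n).neighborSet v := by
    intro j hj
    simp only [Finset.coe_erase, Finset.coe_range, Set.mem_sdiff, Set.mem_Iio,
        Set.mem_singleton_iff] at hj
    obtain ⟨w, hw1, hw2⟩ := hw j hj.1 hj.2
    exact ⟨w, hw1, hw2⟩
  have h2 := Set.ncard_le_ncard h1 (Set.toFinite _)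
  have h3 := Set.ncard_image_le (f := c) (Set.toFinite ((Gn n).neighborSet v))
  rw [Set.ncard_coe_finset, Finset.card_erase_of_mem (Finset.mem_range.2 hk),
    Finset.card_range] at h2
  omega

/-- for every `n ≥ 3`, the b-chromatic number of `Gₙ` is `2n - 1`;
moreover `Δ(Gₙ) = 2n - 2`, so this attains the bound `b(G) ≤ Δ(G) + 1`. -/
theorem bNum_Gn (n : ℕ) (hn : 3 ≤ n) :
    bNum (Gn n) = 2 * n - 1 ∧ maxDeg (Gn n) = 2 * n - 2 := by
  constructor
  · refine IsGreatest.csSup_eq ⟨⟨cG n, cG_isB n hn⟩, ?_⟩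
    rintro k ⟨c, hc⟩
    rcases Nat.eq_zero_or_pos k with rfl | hk
    · omega
    · obtain ⟨v, hv⟩ := le_deg n k hk c hc
      have := deg_le n hn v
      omega
  · refine IsGreatest.csSup_eq ⟨?_, ?_⟩
    · obtain ⟨v, hv⟩ := le_deg n _ (by omega) _ (cG_isB n hn)
      have := deg_le n hn v
      exact ⟨v, by omega⟩
    · rintro d ⟨v, rfl⟩
      exact deg_le n hn v
end

section
/- For every integer n ≥ 3 there exists a finite graph G (namely G_n) with Γ(G) = b(G) = 2n − 1 and z(G) = n; consequently, the gap min{Γ(G), b(G)} − z(G) can be made arbitrarily large. -/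
open SimpleGraph

universe u v

namespace GapAux

/-- tree color: the minimum of `S`, or `m` if empty -/
def tc {m : ℕ} (S : Finset (Fin m)) : ℕ := S.fold min m (fun i => i.val)

/-- `T` is a child of `S` in the binomial tree -/
def P {m : ℕ} (S T : Finset (Fin m)) : Prop :=
  ∃ i : Fin m, (∀ j ∈ S, i < j) ∧ T = insert i S

lemma lt_tc {m : ℕ} (S : Finset (Fin m)) (k : ℕ) :
    k < tc S ↔ k < m ∧ ∀ j ∈ S, k < j.val := by
  unfold tc; exact Finset.lt_fold_min (s := S) (f := fun i : Fin m => i.val) (b := m) k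

lemma tc_le {m : ℕ} (S : Finset (Fin m)) : tc S ≤ m := by
  by_contra h
  have := (lt_tc S m).1 (by omega)
  omega

lemma tc_empty {m : ℕ} : tc (∅ : Finset (Fin m)) = m := by simp [tc]

lemma tc_insert {m : ℕ} (S : Finset (Fin m)) (i : Fin m) (h : ∀ j ∈ S, i < j) :
    tc (insert i S) = i.val ∧ i.val < tc S ∧ i ∉ S := by
  have h1 : i.val < tc S := (lt_tc S _).2 ⟨i.2, fun j hj => h j hj⟩
  have h2 : i ∉ S := fun hi => lt_irrefl _ (h i hi)
  refine ⟨?_, h1, h2⟩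
  unfold tc at *
  rw [Finset.fold_insert h2]
  omega

lemma P_lt {m : ℕ} {S T : Finset (Fin m)} (h : P S T) : tc T < tc S := by
  obtain ⟨i, hi, rfl⟩ := h
  have := tc_insert S i hi
  omega

lemma P_card {m : ℕ} {S T : Finset (Fin m)} (h : P S T) : T.card = S.card + 1 := by
  obtain ⟨i, hi, rfl⟩ := h
  exact Finset.card_insert_of_notMem (tc_insert S i hi).2.2

lemma P_child {m : ℕ} {S T T' : Finset (Fin m)} (h : P S T) (h' : P S T')
    (e : tc T = tc T') : T = T' := by
  obtain ⟨i, hi, rfl⟩ := h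
  obtain ⟨j, hj, rfl⟩ := h'
  rw [(tc_insert S i hi).1, (tc_insert S j hj).1] at e
  rw [Fin.ext e]

lemma P_parent {m : ℕ} {S S' T : Finset (Fin m)} (h : P S T) (h' : P S' T) : S = S' := by
  obtain ⟨i, hi, rfl⟩ := h
  obtain ⟨j, hj, e⟩ := h'
  have a := tc_insert S i hi
  have b := tc_insert S' j hj
  have hij : i = j := Fin.ext (by rw [← a.1, e, b.1])
  subst hij
  rw [← Finset.erase_insert a.2.2, e, Finset.erase_insert b.2.2]

lemma P_exists {m : ℕ} (S : Finset (Fin m)) (k : ℕ) (h : k < tc S) :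
    ∃ T, P S T ∧ tc T = k := by
  obtain ⟨h1, h2⟩ := (lt_tc S k).1 h
  exact ⟨insert ⟨k, h1⟩ S, ⟨⟨k, h1⟩, fun j hj => h2 j hj, rfl⟩,
    (tc_insert S ⟨k, h1⟩ (fun j hj => h2 j hj)).1⟩

lemma P_up {m : ℕ} (T : Finset (Fin m)) (h : T.Nonempty) : ∃ S, P S T := by
  refine ⟨T.erase (T.min' h), T.min' h, fun j hj => ?_, ?_⟩
  · exact Finset.min'_lt_of_mem_erase_min' T h hj
  · rw [Finset.insert_erase (Finset.min'_mem T h)]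

/-- vertices: binomial tree, stars, complete graph -/
inductive W (n m : ℕ) : Type
  | t (S : Finset (Fin m)) : W n m
  | s (a x : Fin (m + 1)) : W n m
  | k (v : Fin n) : W n m

/-- encoding used for finiteness -/
def toSum {n m : ℕ} : W n m → Finset (Fin m) ⊕ (Fin (m + 1) × Fin (m + 1)) ⊕ Fin n
  | .t S => .inl S
  | .s a x => .inr (.inl (a, x))
  | .k v => .inr (.inr v)

lemma toSum_inj {n m : ℕ} : Function.Injective (toSum (n := n) (m := m)) := by
  intro a b h
  cases a <;> cases b <;> simp_all [toSum]

/-- adjacency -/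
def A {n m : ℕ} : W n m → W n m → Prop
  | .t S, .t T => P S T ∨ P T S
  | .s a x, .s b y => a = b ∧ x ≠ y ∧ (x = a ∨ y = a)
  | .k v, .k w => v ≠ w
  | _, _ => False

/-- the graph -/
def Gr (n m : ℕ) : SimpleGraph (W n m) where
  Adj := A
  symm := ⟨by
    intro a b h
    cases a <;> cases b <;> simp only [A] at h ⊢ <;> first | tauto | skip
    grind⟩
  loopless := ⟨by
    intro a h
    cases a <;> simp only [A] at h
    · rcases h with h | h <;> exact lt_irrefl _ (P_lt h)
    · exact h.2.1 rfl
    · exact h rfl⟩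

/-- degree bound -/
def D {n m : ℕ} : W n m → ℕ
  | .t S => min (tc S + 1) m
  | .s a x => if x = a then m else 1
  | .k _ => n - 1

/-- label of the second vertex among the neighbors of the first -/
def e {n m : ℕ} : W n m → W n m → ℕ
  | .t S, .t T => min (tc S) (tc T)
  | .s a x, .s _ y => if x = a then (if y.val = m then a.val else y.val) else 0
  | .k v, .k w => if w.val = n - 1 then v.val else w.val
  | _, _ => 0

lemma D_le {n m : ℕ} (hn : 3 ≤ n) (hm : m = 2 * n - 2) (v : W n m) : D v ≤ m := by
  cases v <;> simp only [D]
  · omega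
  · split_ifs <;> omega
  · omega

lemma e_lt {n m : ℕ} (hn : 3 ≤ n) (v w : W n m) (h : (Gr n m).Adj v w) : e v w < D v := by
  change A v w at h
  cases v <;> cases w <;> simp only [A] at h <;> simp only [e, D]
  · rename_i S T
    have := tc_le S
    have := tc_le T
    rcases h with h | h <;> have := P_lt h <;> omega
  · rename_i a x b y
    have := a.2
    have := y.2
    obtain ⟨rfl, h1, h2⟩ := h
    have : x.val ≠ y.val := fun h => h1 (Fin.ext h)
    split_ifs with h3 h4
    · subst h3; omega
    · omega
    · omega
  · rename_i v w
    have := v.2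
    have := w.2
    have : v.val ≠ w.val := fun h' => h (Fin.ext h')
    split_ifs <;> omega

lemma e_inj {n m : ℕ} (v w w' : W n m) (h : (Gr n m).Adj v w) (h' : (Gr n m).Adj v w')
    (he : e v w = e v w') : w = w' := by
  change A v w at h
  change A v w' at h'
  cases v <;> cases w <;> simp only [A] at h <;> cases w' <;> simp only [A] at h' <;>
    simp only [e] at he
  · congr 1
    rcases h with h | h <;> rcases h' with h' | h' <;> have a := P_lt h <;> have b := P_lt h'
    · exact P_child h h' (by omega)
    · omega
    · omega
    · exact P_parent h h'
  · rename_i a x b y b' y'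
    obtain ⟨rfl, h1, h2⟩ := h
    obtain ⟨rfl, h3, h4⟩ := h'
    congr 1
    by_cases hx : x = a
    · subst hx
      have q1 : x.val ≠ y.val := fun h => h1 (Fin.ext h)
      have q2 : x.val ≠ y'.val := fun h => h3 (Fin.ext h)
      apply Fin.ext
      simp only [if_true] at he
      split_ifs at he <;> omega
    · rw [h2.resolve_left hx, h4.resolve_left hx]
  · rename_i v w w'
    congr 1
    have q1 : v.val ≠ w.val := fun h' => h (Fin.ext h')
    have q2 : v.val ≠ w'.val := fun h => h' (Fin.ext h)
    apply Fin.ext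
    split_ifs at he <;> omega

lemma e_heavy {n m : ℕ} (hn : 3 ≤ n) (v w : W n m) (h : (Gr n m).Adj v w)
    (hv : n ≤ D v) (hw : n ≤ D w) : n - 1 ≤ e v w := by
  change A v w at h
  cases v <;> cases w <;> simp only [A] at h <;> simp only [e, D] at *
  · omega
  · obtain ⟨rfl, h1, h2⟩ := h
    split_ifs at hv hw <;> first | omega | skip
  · omega

lemma card_le {n m : ℕ} (hn : 3 ≤ n) (v : W n m) (c : W n m → ℕ) (s : Finset ℕ)
    (h : ∀ i ∈ s, ∃ w, (Gr n m).Adj v w ∧ c w = i) : s.card ≤ D v := by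
  have : Nonempty (W n m) := ⟨v⟩
  choose! f hf using h
  rw [← Finset.card_range (D v)]
  apply Finset.card_le_card_of_injOn (fun i => e v (f i))
  · intro i hi
    simpa using e_lt hn _ _ (hf i hi).1
  · intro i hi j hj hij
    rw [← (hf i hi).2, ← (hf j hj).2, e_inj _ _ _ (hf i hi).1 (hf j hj).1 hij]

lemma b_ub {n m k : ℕ} (hn : 3 ≤ n) (hm : m = 2 * n - 2) (c : W n m → ℕ)
    (h : IsBColoring (Gr n m) k c) : k ≤ m + 1 := by
  rcases Nat.eq_zero_or_pos k with h0 | h0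
  · omega
  obtain ⟨v, -, hv⟩ := h.2.2 (k - 1) (by omega)
  have := card_le hn v c (Finset.range (k - 1)) (fun i hi => by
    have := Finset.mem_range.1 hi
    exact hv i (by omega) (by omega))
  have := D_le hn hm v
  simp at *
  omega

lemma g_ub {n m k : ℕ} (hn : 3 ≤ n) (hm : m = 2 * n - 2) (c : W n m → ℕ)
    (h : IsGrundyColoring (Gr n m) k c) : k ≤ m + 1 := by
  rcases Nat.eq_zero_or_pos k with h0 | h0
  · omega
  obtain ⟨-, -, h3, h4⟩ := h
  obtain ⟨v, hv⟩ := h3 (k - 1) (by omega)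
  have := card_le hn v c (Finset.range (k - 1)) (fun i hi => by
    have := Finset.mem_range.1 hi
    exact h4 v i (by omega))
  have := D_le hn hm v
  simp at *
  omega

lemma z_ub {n m k : ℕ} (hn : 3 ≤ n) (hm : m = 2 * n - 2) (c : W n m → ℕ)
    (h : IsZColoring (Gr n m) k c) : k ≤ n := by
  by_contra hk
  obtain ⟨-, -, -, -, u, h1, h2, h3⟩ := h
  have hD : ∀ j, j < k → n ≤ D (u j) := by
    intro j hj
    have := card_le hn (u j) c ((Finset.range k).erase j) (fun i hi => by
      simp at hi
      exact h3 i hi.2 j hj hi.1)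
    rw [Finset.card_erase_of_mem (by simpa using hj)] at this
    simp at this
    omega
  have : (Finset.range (k - 1)).card ≤ (Finset.Ico (n - 1) m).card := by
    apply Finset.card_le_card_of_injOn (fun i => e (u (k - 1)) (u i))
    · intro i hi
      simp only [Finset.coe_range, Set.mem_Iio] at hi
      simp only [Finset.coe_Ico, Set.mem_Ico]
      exact ⟨e_heavy hn _ _ (h2 i hi) (hD _ (by omega)) (hD _ (by omega)),
        (e_lt hn _ _ (h2 i hi)).trans_le (D_le hn hm _)⟩
    · intro i hi j hj hij
      simp only [Finset.coe_range, Set.mem_Iio] at hi hj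
      rw [← h1 i (by omega), ← h1 j (by omega), e_inj _ _ _ (h2 i hi) (h2 j hj) hij]
  simp at this
  omega

/-- Grundy coloring -/
def cg {n m : ℕ} : W n m → ℕ
  | .t S => tc S
  | .s a x => if x = a then 1 else 0
  | .k v => v.val

/-- b-coloring -/
def cb {n m : ℕ} : W n m → ℕ
  | .t S => tc S
  | .s _ x => x.val
  | .k v => v.val

/-- z-coloring -/
def cz {n m : ℕ} : W n m → ℕ
  | .t S => S.card % 2
  | .s a x => if x = a then 1 else 0
  | .k v => v.val

lemma star_grundy {n m : ℕ} (hm : 1 ≤ m) (a x : Fin (m + 1)) (h : x = a) :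
    ∃ y, y ≠ a ∧ (Gr n m).Adj (.s a x) (.s a y) := by
  have : Nontrivial (Fin (m + 1)) := Fin.nontrivial_iff_two_le.2 (by omega)
  obtain ⟨y, hy⟩ := exists_ne a
  exact ⟨y, hy, rfl, by rw [h]; exact hy.symm, Or.inl h⟩

lemma cg_ok {n m : ℕ} (hn : 3 ≤ n) (hm : m = 2 * n - 2) :
    IsGrundyColoring (Gr n m) (m + 1) cg := by
  refine ⟨?_, ?_, ?_, ?_⟩
  · intro v
    cases v <;> simp only [cg]
    · have := tc_le (by assumption); omega
    · split_ifs <;> omega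
    · omega
  · intro v w h
    change A v w at h
    cases v <;> cases w <;> simp only [A] at h <;> simp only [cg]
    · rcases h with h | h <;> have := P_lt h <;> omega
    · obtain ⟨rfl, h1, h2⟩ := h
      split_ifs <;> simp_all
    · exact fun h' => h (Fin.ext h')
  · intro i hi
    rcases Nat.lt_or_ge i m with h | h
    · obtain ⟨T, -, hT⟩ := P_exists (∅ : Finset (Fin m)) i (by rw [tc_empty]; exact h)
      exact ⟨.t T, hT⟩
    · exact ⟨.t ∅, by simp only [cg, tc_empty]; omega⟩
  · intro v i hi
    cases v <;> simp only [cg] at hi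
    · obtain ⟨T, hT, hc⟩ := P_exists _ i hi
      exact ⟨.t T, Or.inl hT, hc⟩
    · split_ifs at hi with h
      · obtain ⟨y, hy, hA⟩ := star_grundy (n := n) (by omega) _ _ h
        exact ⟨_, hA, by simp [cg, hy]; omega⟩
      · omega
    · rename_i v
      exact ⟨.k ⟨i, by omega⟩, fun h => by have := congrArg Fin.val h; simp at this; omega, rfl⟩

lemma cb_ok {n m : ℕ} (hn : 3 ≤ n) (hm : m = 2 * n - 2) :
    IsBColoring (Gr n m) (m + 1) cb := by
  refine ⟨?_, ?_, ?_⟩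
  · intro v
    cases v <;> simp only [cb]
    · have := tc_le (by assumption); omega
    · omega
    · omega
  · intro v w h
    change A v w at h
    cases v <;> cases w <;> simp only [A] at h <;> simp only [cb]
    · rcases h with h | h <;> have := P_lt h <;> omega
    · exact fun h' => h.2.1 (Fin.ext h')
    · exact fun h' => h (Fin.ext h')
  · intro i hi
    refine ⟨.s ⟨i, hi⟩ ⟨i, hi⟩, rfl, fun j hj hji => ⟨.s ⟨i, hi⟩ ⟨j, hj⟩, ?_, rfl⟩⟩
    refine ⟨rfl, fun h => hji ?_, Or.inl rfl⟩
    exact (congrArg Fin.val h).symm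

lemma cz_ok {n m : ℕ} (hn : 3 ≤ n) (hm : m = 2 * n - 2) :
    IsZColoring (Gr n m) n cz := by
  refine ⟨?_, ?_, ?_, ?_, ?_⟩
  · intro v
    cases v <;> simp only [cz]
    · omega
    · split_ifs <;> omega
    · omega
  · intro v w h
    change A v w at h
    cases v <;> cases w <;> simp only [A] at h <;> simp only [cz]
    · rcases h with h | h <;> have := P_card h <;> omega
    · obtain ⟨rfl, h1, h2⟩ := h
      split_ifs <;> simp_all
    · exact fun h' => h (Fin.ext h')
  · exact fun i hi => ⟨.k ⟨i, hi⟩, rfl⟩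
  · intro v i hi
    cases v <;> simp only [cz] at hi
    · rename_i S
      obtain ⟨T, hT⟩ := P_up S (Finset.card_pos.1 (by omega))
      refine ⟨.t T, Or.inr hT, ?_⟩
      have := P_card hT
      simp only [cz]
      omega
    · split_ifs at hi with h
      · obtain ⟨y, hy, hA⟩ := star_grundy (n := n) (by omega) _ _ h
        exact ⟨_, hA, by simp [cz, hy]; omega⟩
      · omega
    · rename_i v
      exact ⟨.k ⟨i, by omega⟩, fun h => by have := congrArg Fin.val h; simp at this; omega, rfl⟩
  · have key : ∀ i j (hi : i < n) (hj : j < n), i ≠ j →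
        (Gr n m).Adj (.k ⟨i, hi⟩) (.k ⟨j, hj⟩) :=
      fun i j hi hj hij h => hij (congrArg Fin.val h)
    refine ⟨fun j => if h : j < n then .k ⟨j, h⟩ else .t ∅, ?_, ?_, ?_⟩
    · intro j hj
      simp [hj, cz]
    · intro j hj
      have h1 : j < n := by omega
      have h2 : n - 1 < n := by omega
      simp only [h1, h2, dif_pos]
      exact key _ _ _ _ (by omega)
    · intro i hi j hj hij
      simp only [hj, dif_pos]
      exact ⟨_, key j i hj hi hij.symm, rfl⟩

lemma sSup_eq {s : Set ℕ} {k : ℕ} (h : k ∈ s) (h' : ∀ x ∈ s, x ≤ k) : sSup s = k :=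
  IsGreatest.csSup_eq ⟨h, h'⟩

end GapAux

/-- for every `n ≥ 3` there is a finite graph `G` with
`Γ(G) = b(G) = 2n - 1` and `z(G) = n`; hence the gap
`min {Γ(G), b(G)} - z(G)` can be made arbitrarily large. -/
theorem exists_graph_large_gap (n : ℕ) (hn : 3 ≤ n) :
    ∃ (V : Type) (_ : Fintype V) (G : SimpleGraph V),
      grundyNum G = 2 * n - 1 ∧ bNum G = 2 * n - 1 ∧ zNum G = n ∧
      min (grundyNum G) (bNum G) - zNum G = n - 1 := by
  obtain ⟨m, hm⟩ : ∃ m, m = 2 * n - 2 := ⟨_, rfl⟩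
  have hg : grundyNum (GapAux.Gr n m) = m + 1 :=
    GapAux.sSup_eq ⟨_, GapAux.cg_ok hn hm⟩ (fun k ⟨c, hc⟩ => GapAux.g_ub hn hm c hc)
  have hb : bNum (GapAux.Gr n m) = m + 1 :=
    GapAux.sSup_eq ⟨_, GapAux.cb_ok hn hm⟩ (fun k ⟨c, hc⟩ => GapAux.b_ub hn hm c hc)
  have hz : zNum (GapAux.Gr n m) = n :=
    GapAux.sSup_eq ⟨_, GapAux.cz_ok hn hm⟩ (fun k ⟨c, hc⟩ => GapAux.z_ub hn hm c hc)
  refine ⟨GapAux.W n m, Fintype.ofInjective _ GapAux.toSum_inj, GapAux.Gr n m, ?_, ?_, ?_, ?_⟩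
  · omega
  · omega
  · omega
  · rw [hg, hb, hz, min_self]; omega
end

section
/- Every finite acyclic graph (forest) F is z-monotonic: for every induced subgraph H1 of F and every induced subgraph H2 of H1, z(H2) ≤ z(H1). In particular, for every induced subgraph H of F one has z(H) ≤ z(F). -/
open SimpleGraph

universe u v

namespace ZMono

/-- edges of `G` inside `S`, as a graph on `V`. -/
def inside {V : Type u} (G : SimpleGraph V) (S : Set V) : SimpleGraph V where
  Adj a b := G.Adj a b ∧ a ∈ S ∧ b ∈ S
  symm := ⟨fun _ _ h => ⟨h.1.symm, h.2.2, h.2.1⟩⟩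
  loopless := ⟨fun _ h => G.irrefl h.1⟩

def PC {V : Type u} (G : SimpleGraph V) (S : Set V) : Prop :=
  ∀ a ∈ S, ∀ b ∈ S, G.Reachable a b → (inside G S).Reachable a b

def OK {V : Type u} (G : SimpleGraph V) (k : ℕ) (S : Set V) (c : V → ℕ) : Prop :=
  (∀ x ∈ S, c x < k) ∧ (∀ x ∈ S, ∀ y ∈ S, G.Adj x y → c x ≠ c y) ∧
  (∀ x ∈ S, ∀ i, i < c x → ∃ w ∈ S, G.Adj x w ∧ c w = i)

lemma inside_mono {V : Type u} (G : SimpleGraph V) {S T : Set V} (h : S ⊆ T) :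
    inside G S ≤ inside G T := by
  intro a b hab
  exact ⟨hab.1, h hab.2.1, h hab.2.2⟩

lemma uniq {V : Type u} (G : SimpleGraph V) (hG : G.IsAcyclic) {S : Set V} (hS : PC G S)
    {v a b : V} (hv : v ∉ S) (ha : a ∈ S) (hb : b ∈ S) (hva : G.Adj v a) (hvb : G.Adj v b) :
    a = b := by
  by_contra hab
  have h1 : (inside G S).Reachable a b := hS a ha b hb (hva.symm.reachable.trans hvb.reachable)
  have hbr := SimpleGraph.isAcyclic_iff_forall_adj_isBridge.1 hG hva
  rw [SimpleGraph.isBridge_iff] at hbr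
  apply hbr
  have hle : inside G S ≤ G.deleteEdges {s(v, a)} := by
    intro x y hxy
    rw [SimpleGraph.deleteEdges_adj]
    refine ⟨hxy.1, ?_⟩
    rintro h
    rw [Set.mem_singleton_iff, Sym2.eq_iff] at h
    rcases h with ⟨h, _⟩ | ⟨_, h⟩
    · exact hv (h ▸ hxy.2.1)
    · exact hv (h ▸ hxy.2.2)
  have h2 : (G.deleteEdges {s(v, a)}).Adj v b := by
    rw [SimpleGraph.deleteEdges_adj]
    refine ⟨hvb, ?_⟩
    intro h
    rw [Set.mem_singleton_iff, Sym2.eq_iff] at h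
    rcases h with ⟨_, h⟩ | ⟨h, _⟩
    · exact hab h.symm
    · exact hv (h ▸ ha)
  exact h2.reachable.trans (h1.mono hle).symm

lemma closed_reach {V : Type u} (G : SimpleGraph V) {S : Set V}
    (h : ∀ s ∈ S, ∀ v, G.Adj s v → v ∈ S) {a b : V} (ha : a ∈ S) (hab : G.Reachable a b) :
    b ∈ S := by
  obtain ⟨p⟩ := hab
  induction p with
  | nil => exact ha
  | cons e p ih => exact ih (h _ ha _ e)

lemma step {V : Type u} (G : SimpleGraph V) (hG : G.IsAcyclic) {k : ℕ} (hk : 2 ≤ k)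
    {S : Set V} (c : V → ℕ) (hS : PC G S) (hne : ∃ v, v ∉ S) :
    ∃ v q, v ∉ S ∧ q < k ∧ PC G (insert v S) ∧ (∀ s ∈ S, G.Adj v s → c s ≠ q) ∧
      (∀ i, i < q → ∃ w ∈ S, G.Adj v w ∧ c w = i) := by
  by_cases h : ∃ s ∈ S, ∃ v, G.Adj s v ∧ v ∉ S
  · obtain ⟨s, hs, v, hsv, hv⟩ := h
    refine ⟨v, if c s = 0 then 1 else 0, hv, by split_ifs <;> omega, ?_, ?_, ?_⟩
    · have hm := inside_mono G (Set.subset_insert v S)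
      have key : ∀ x ∈ insert v S, G.Reachable s x → (inside G (insert v S)).Reachable s x := by
        intro x hx hr
        rcases hx with rfl | hx
        · exact SimpleGraph.Adj.reachable
            (show (inside G _).Adj s x from ⟨hsv, Set.mem_insert_of_mem _ hs, Set.mem_insert _ _⟩)
        · exact (hS s hs x hx hr).mono hm
      intro a ha b hb hab
      by_cases hsa : G.Reachable s a
      · exact (key a ha hsa).symm.trans (key b hb (hsa.trans hab))
      · have hsb : ¬ G.Reachable s b := fun h => hsa (h.trans hab.symm)
        rcases ha with rfl | ha
        · exact absurd hsv.reachable hsa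
        rcases hb with rfl | hb
        · exact absurd hsv.reachable hsb
        exact (hS a ha b hb hab).mono hm
    · intro x hx hvx
      have := uniq G hG hS hv hs hx hsv.symm hvx
      subst this
      split_ifs <;> omega
    · intro i hi
      refine ⟨s, hs, hsv.symm, ?_⟩
      split_ifs at hi <;> omega
  · push Not at h
    obtain ⟨v, hv⟩ := hne
    refine ⟨v, 0, hv, by omega, ?_, ?_, by intro i hi; omega⟩
    · have hm := inside_mono G (Set.subset_insert v S)
      intro a ha b hb hab
      rcases ha with rfl | ha
      · rcases hb with rfl | hb
        · exact SimpleGraph.Reachable.refl _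
        · exact absurd (closed_reach G h hb hab.symm) hv
      · rcases hb with rfl | hb
        · exact absurd (closed_reach G h ha hab) hv
        · exact (hS a ha b hb hab).mono hm
    · intro s hs hvs
      exact absurd (h s hs v hvs.symm) hv

lemma extend {V : Type u} [Finite V] (G : SimpleGraph V) (hG : G.IsAcyclic) {k : ℕ} (hk : 2 ≤ k) :
    ∀ n : ℕ, ∀ (S : Set V) (c : V → ℕ), Sᶜ.ncard = n → PC G S → OK G k S c →
      ∃ c' : V → ℕ, (∀ x ∈ S, c' x = c x) ∧ OK G k Set.univ c' := by
  classical
  intro n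
  induction n with
  | zero =>
    intro S c hn _ hc
    have : S = Set.univ := by
      rw [Set.ncard_eq_zero] at hn
      simpa using hn
    subst this
    exact ⟨c, fun _ _ => rfl, hc⟩
  | succ n ih =>
    intro S c hn hS hc
    have hne : ∃ v, v ∉ S := by
      by_contra h
      push Not at h
      have : S = Set.univ := Set.eq_univ_of_forall h
      subst this
      simp at hn
    obtain ⟨v, q, hv, hq, hP, h1, h2⟩ := step G hG hk c hS hne
    have hagree : ∀ x ∈ S, Function.update c v q x = c x := by
      intro x hx
      rw [Function.update_of_ne]
      rintro rfl
      exact hv hx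
    have hvq : Function.update c v q v = q := Function.update_self ..
    obtain ⟨c', hc', hok⟩ := ih (insert v S) (Function.update c v q) (by
      have : (insert v S)ᶜ = Sᶜ \ {v} := by
        ext x; simp; tauto
      rw [this, Set.ncard_sdiff_singleton_of_mem (by simpa using hv)]
      omega) hP (by
      refine ⟨?_, ?_, ?_⟩
      · rintro x (rfl | hx)
        · rwa [hvq]
        · rw [hagree x hx]; exact hc.1 x hx
      · rintro x (rfl | hx) y (rfl | hy) hxy
        · exact absurd hxy (G.irrefl)
        · rw [hvq, hagree y hy]; exact (h1 y hy hxy).symm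
        · rw [hvq, hagree x hx]; exact h1 x hx hxy.symm
        · rw [hagree x hx, hagree y hy]; exact hc.2.1 x hx y hy hxy
      · rintro x (rfl | hx) i hi
        · rw [hvq] at hi
          obtain ⟨w, hw, ha, hb⟩ := h2 i hi
          exact ⟨w, Set.mem_insert_of_mem _ hw, ha, by rw [hagree w hw]; exact hb⟩
        · rw [hagree x hx] at hi
          obtain ⟨w, hw, ha, hb⟩ := hc.2.2 x hx i hi
          exact ⟨w, Set.mem_insert_of_mem _ hw, ha, by rw [hagree w hw]; exact hb⟩)
    exact ⟨c', fun x hx => by rw [hc' x (Set.mem_insert_of_mem _ hx), hagree x hx], hok⟩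

lemma mk_z {V : Type u} [Finite V] (G : SimpleGraph V) (hG : G.IsAcyclic) {k : ℕ} (hk : 2 ≤ k)
    (S : Set V) (c : V → ℕ) (hS : PC G S) (hc : OK G k S c) (u : ℕ → V)
    (hu : ∀ j, j < k → u j ∈ S ∧ c (u j) = j)
    (hadj : ∀ j, j < k - 1 → G.Adj (u (k - 1)) (u j))
    (hnb : ∀ i, i < k → ∀ j, j < k → i ≠ j → ∃ w ∈ S, G.Adj (u j) w ∧ c w = i) :
    ∃ c' : V → ℕ, IsZColoring G k c' := by
  obtain ⟨c', h1, h2, h3, h4⟩ := extend G hG hk _ S c rfl hS hc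
  have hu' : ∀ j, j < k → c' (u j) = j := fun j hj => by
    rw [h1 _ (hu j hj).1]; exact (hu j hj).2
  refine ⟨c', fun v => h2 v trivial, fun x y h => h3 x trivial y trivial h,
    fun i hi => ⟨u i, hu' i hi⟩, ?_, u, hu', hadj, ?_⟩
  · intro v i hi
    obtain ⟨w, _, hw⟩ := h4 v trivial i hi
    exact ⟨w, hw⟩
  · intro i hi j hj hij
    obtain ⟨w, hw, ha, hb⟩ := hnb i hi j hj hij
    exact ⟨w, ha, by rw [h1 w hw]; exact hb⟩

lemma z_edge {V : Type u} [Finite V] (G : SimpleGraph V) (hG : G.IsAcyclic) {a b : V}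
    (hab : G.Adj a b) : ∃ c' : V → ℕ, IsZColoring G 2 c' := by
  classical
  have hne : a ≠ b := hab.ne
  have hP : PC G {a, b} := by
    have key : (inside G {a, b}).Reachable a b :=
      SimpleGraph.Adj.reachable (show (inside G _).Adj a b from ⟨hab, by simp, by simp⟩)
    rintro x (rfl | rfl) y (rfl | rfl) _
    · exact SimpleGraph.Reachable.refl _
    · exact key
    · exact key.symm
    · exact SimpleGraph.Reachable.refl _
  refine mk_z G hG le_rfl {a, b} (fun x => if x = b then 1 else 0) hP ⟨?_, ?_, ?_⟩
    (fun j => if j = 1 then b else a) ?_ ?_ ?_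
  · intro x _
    dsimp only
    split_ifs <;> omega
  · rintro x (rfl | rfl) y (rfl | rfl) h
    · exact absurd h (G.irrefl)
    · simp [hne]
    · simp [hne]
    · exact absurd h (G.irrefl)
  · rintro x (rfl | rfl) i hi
    · simp [hne] at hi
    · simp at hi
      subst hi
      exact ⟨a, by simp, hab.symm, by simp [hne]⟩
  · intro j hj
    interval_cases j <;> simp [hne]
  · intro j hj
    have : j = 0 := by omega
    subst this
    simpa using hab.symm
  · intro i hi j hj hij
    interval_cases i <;> interval_cases j
    · exact absurd rfl hij
    · exact ⟨a, by simp, by simpa using hab.symm, by simp [hne]⟩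
    · exact ⟨b, by simp, by simpa using hab, by simp⟩
    · exact absurd rfl hij

lemma main {U : Type v} {V : Type u} [Finite V] (H : SimpleGraph U) (G : SimpleGraph V)
    (hG : G.IsAcyclic) (f : H ↪g G) {k : ℕ} {c : U → ℕ} (hc : IsZColoring H k c) :
    ∃ k', k ≤ k' ∧ ∃ c' : V → ℕ, IsZColoring G k' c' := by
  obtain ⟨h1, h2, h3, h4, u, hu, hadj, hnb⟩ := hc
  by_cases hk : 2 ≤ k
  · refine ⟨k, le_rfl, ?_⟩
    let r := u (k - 1)
    let K : Set V := {x | ∃ y, f y = x ∧ H.Reachable y r}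
    have hext : ∀ y, Function.extend f c 0 (f y) = c y := fun y => f.injective.extend_apply c 0 y
    have hreach : ∀ y, H.Reachable y r → (inside G K).Reachable (f y) (f r) := by
      rintro y ⟨p⟩
      generalize hr : r = r' at p
      induction p with
      | nil => exact SimpleGraph.Reachable.refl _
      | @cons y z w e p ih =>
        subst hr
        have hz : H.Reachable z r := ⟨p⟩
        refine SimpleGraph.Reachable.trans ?_ (ih rfl)
        exact SimpleGraph.Adj.reachable (show (inside G K).Adj (f y) (f z) from
          ⟨f.map_rel_iff.2 e, ⟨y, rfl, e.reachable.trans hz⟩, ⟨z, rfl, hz⟩⟩)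
    have huK : ∀ j, j < k → H.Reachable (u j) r := by
      intro j hj
      by_cases hj' : j < k - 1
      · exact (hadj j hj').symm.reachable
      · have : j = k - 1 := by omega
        subst this
        exact SimpleGraph.Reachable.refl _
    refine mk_z G hG hk K (Function.extend f c 0) ?_ ⟨?_, ?_, ?_⟩ (fun j => f (u j)) ?_ ?_ ?_
    · rintro _ ⟨x, rfl, hx⟩ _ ⟨y, rfl, hy⟩ _
      exact (hreach x hx).trans (hreach y hy).symm
    · rintro _ ⟨x, rfl, hx⟩
      rw [hext]; exact h1 x
    · rintro _ ⟨x, rfl, hx⟩ _ ⟨y, rfl, hy⟩ hxy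
      rw [hext, hext]; exact h2 (f.map_rel_iff.1 hxy)
    · rintro _ ⟨x, rfl, hx⟩ i hi
      rw [hext] at hi
      obtain ⟨w, hw, hw'⟩ := h4 x i hi
      exact ⟨f w, ⟨w, rfl, hw.symm.reachable.trans hx⟩, f.map_rel_iff.2 hw, by rw [hext, hw']⟩
    · intro j hj
      exact ⟨⟨u j, rfl, huK j hj⟩, by rw [hext, hu j hj]⟩
    · intro j hj
      exact f.map_rel_iff.2 (hadj j hj)
    · intro i hi j hj hij
      obtain ⟨w, hw, hw'⟩ := hnb i hi j hj hij
      exact ⟨f w, ⟨w, rfl, hw.symm.reachable.trans (huK j hj)⟩, f.map_rel_iff.2 hw,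
        by rw [hext, hw']⟩
  · by_cases he : ∃ a b, G.Adj a b
    · obtain ⟨a, b, hab⟩ := he
      exact ⟨2, by omega, z_edge G hG hab⟩
    · push Not at he
      refine ⟨1, by omega, fun _ => 0, fun _ => Nat.one_pos, fun x y h => absurd h (he x y),
        fun i hi => ⟨f (u 0), (by omega : 0 = i)⟩, fun v i hi => absurd hi (Nat.not_lt_zero i), fun _ => f (u 0),
        fun j hj => (by omega : 0 = j), fun j hj => by omega, fun i hi j hj hij => by omega⟩

lemma z_le {U : Type v} {V : Type u} [Finite V] (H : SimpleGraph U) (G : SimpleGraph V)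
    (hG : G.IsAcyclic) (f : H ↪g G) : zNum H ≤ zNum G := by
  have hb : BddAbove {k | ∃ c : V → ℕ, IsZColoring G k c} := by
    refine ⟨Nat.card V, ?_⟩
    rintro k ⟨c, -, -, -, -, u, hu, -⟩
    have hinj : Function.Injective (fun i : Fin k => u i) := by
      intro i j hij
      have := congrArg c hij
      simp only [hu i i.2, hu j j.2] at this
      exact Fin.ext this
    simpa using Nat.card_le_card_of_injective _ hinj
  unfold zNum
  rcases Set.eq_empty_or_nonempty {k | ∃ c : U → ℕ, IsZColoring H k c} with h | h
  · rw [h]; simp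
  · apply csSup_le h
    rintro k ⟨c, hc⟩
    obtain ⟨k', hk, hc'⟩ := main H G hG f hc
    exact hk.trans (le_csSup hb hc')

end ZMono

/-- every finite forest `F` is z-monotonic: whenever `H₂` is an
induced subgraph of an induced subgraph `H₁` of `F` (i.e. `t ⊆ s` are vertex
subsets and `Hᵢ` is induced on them), we have `z(H₂) ≤ z(H₁)`; in particular
`z(H) ≤ z(F)` for every induced subgraph `H` of `F`. -/
theorem forest_z_monotonic {V : Type u} [Fintype V] (F : SimpleGraph V)
    (hF : F.IsAcyclic) :
    (∀ s t : Set V, t ⊆ s → zNum (F.induce t) ≤ zNum (F.induce s)) ∧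
    (∀ s : Set V, zNum (F.induce s) ≤ zNum F) := by
  refine ⟨fun s t hts => ?_, fun s => ?_⟩
  · exact ZMono.z_le _ _ (hF.induce s) (SimpleGraph.induceHomOfLE F hts)
  · exact ZMono.z_le _ _ hF (SimpleGraph.Embedding.induce s)
end

section
/- For every integer k ≥ 1, the tree atom T_k satisfies z(T_k) = ⌈(k+1)/2⌉, where z denotes the z-chromatic number. -/
open SimpleGraph

universe u v

/-- Vertex set of the tree atom `Tₖ`: `T₁` has one vertex, and `T_{k+1}` has
one new pendant leaf (the `Sum.inr` copy) for each vertex of `Tₖ`. -/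
def AtomVert : ℕ → Type
  | 0 => Empty
  | 1 => PUnit
  | (k + 2) => AtomVert (k + 1) ⊕ AtomVert (k + 1)

/-- Attach one new pendant leaf (`Sum.inr a`) to each vertex (`Sum.inl a`)
of a graph. -/
def pendantExtend {W : Type} (G : SimpleGraph W) : SimpleGraph (W ⊕ W) :=
  SimpleGraph.fromRel (fun x y =>
    (∃ a b, x = Sum.inl a ∧ y = Sum.inl b ∧ G.Adj a b) ∨
    (∃ a, x = Sum.inl a ∧ y = Sum.inr a))

/-- The tree atom `Tₖ`: `T₁ = K₁`, `T₂ = K₂`, and `T_{k+1}` is obtained from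
`Tₖ` by attaching one pendant leaf to each vertex of `Tₖ`. -/
def AtomGraph : (k : ℕ) → SimpleGraph (AtomVert k)
  | 0 => ⊥
  | 1 => ⊥
  | (k + 2) => pendantExtend (AtomGraph (k + 1))

theorem pe_ll {W : Type} (G : SimpleGraph W) (a b : W) :
    (pendantExtend G).Adj (Sum.inl a) (Sum.inl b) ↔ G.Adj a b := by
  simp only [pendantExtend, SimpleGraph.fromRel_adj]
  constructor
  · rintro ⟨_, (⟨x, y, h1, h2, h⟩ | ⟨x, h1, h2⟩) | (⟨x, y, h1, h2, h⟩ | ⟨x, h1, h2⟩)⟩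
    · cases h1; cases h2; exact h
    · cases h2
    · cases h1; cases h2; exact h.symm
    · cases h2
  · intro h
    exact ⟨fun e => h.ne (Sum.inl.inj e), Or.inl (Or.inl ⟨a, b, rfl, rfl, h⟩)⟩

theorem pe_lr {W : Type} (G : SimpleGraph W) (a b : W) :
    (pendantExtend G).Adj (Sum.inl a) (Sum.inr b) ↔ b = a := by
  simp only [pendantExtend, SimpleGraph.fromRel_adj]
  constructor
  · rintro ⟨_, (⟨x, y, h1, h2, h⟩ | ⟨x, h1, h2⟩) | (⟨x, y, h1, h2, h⟩ | ⟨x, h1, h2⟩)⟩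
    · cases h2
    · cases h1; cases h2; rfl
    · cases h1
    · cases h1
  · rintro rfl
    exact ⟨by simp, Or.inl (Or.inr ⟨b, rfl, rfl⟩)⟩

theorem pe_rl {W : Type} (G : SimpleGraph W) (a b : W) :
    (pendantExtend G).Adj (Sum.inr a) (Sum.inl b) ↔ a = b := by
  rw [SimpleGraph.adj_comm, pe_lr]

theorem pe_rr {W : Type} (G : SimpleGraph W) (a b : W) :
    ¬ (pendantExtend G).Adj (Sum.inr a) (Sum.inr b) := by
  simp [pendantExtend, SimpleGraph.fromRel_adj]

theorem card_inr_nbrs {W : Type} (G : SimpleGraph W) (a : W) (S : Finset (W ⊕ W))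
    (hS : ∀ w ∈ S, (pendantExtend G).Adj (Sum.inr a) w) : S.card ≤ 1 := by
  rw [Finset.card_le_one]
  have key : ∀ w ∈ S, w = Sum.inl a := by
    intro w hw
    have := hS w hw
    rcases w with b | b
    · rw [pe_rl] at this; rw [this]
    · exact absurd this (pe_rr G a b)
  intro x hx y hy
  rw [key x hx, key y hy]

theorem card_inl_nbrs {W : Type} (G : SimpleGraph W) (a : W) (S : Finset (W ⊕ W))
    (hS : ∀ w ∈ S, (pendantExtend G).Adj (Sum.inl a) w) :
    (∀ w ∈ S.toLeft, G.Adj a w) ∧ S.toRight.card ≤ 1 := by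
  constructor
  · intro w hw
    rw [Finset.mem_toLeft] at hw
    exact (pe_ll G a w).1 (hS _ hw)
  · rw [Finset.card_le_one]
    intro x hx y hy
    rw [Finset.mem_toRight] at hx hy
    rw [(pe_lr G a x).1 (hS _ hx), (pe_lr G a y).1 (hS _ hy)]

theorem atom_deg (n : ℕ) : ∀ (v : AtomVert (n + 1)) (S : Finset (AtomVert (n + 1))),
    (∀ w ∈ S, (AtomGraph (n + 1)).Adj v w) → S.card ≤ n := by
  induction n with
  | zero =>
    intro v S hS
    rw [Nat.le_zero, Finset.card_eq_zero, Finset.eq_empty_iff_forall_notMem]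
    intro w hw
    exact hS w hw
  | succ n ih =>
    intro v S hS
    change Finset (AtomVert (n + 1) ⊕ AtomVert (n + 1)) at S
    rcases v with a | a
    · obtain ⟨h1, h2⟩ := card_inl_nbrs (AtomGraph (n + 1)) a S hS
      have := ih a _ h1
      have := S.card_toLeft_add_card_toRight
      change S.card ≤ _
      omega
    · have := card_inr_nbrs (AtomGraph (n + 1)) a S hS
      change S.card ≤ _
      omega

theorem atom_nbr (n : ℕ) : ∀ (v : AtomVert (n + 1)) (S : Finset (AtomVert (n + 1))) (d : ℕ),
    1 ≤ d → S.Nonempty →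
    (∀ w ∈ S, (AtomGraph (n + 1)).Adj v w ∧ ∃ S' : Finset (AtomVert (n + 1)),
      d ≤ S'.card ∧ ∀ x ∈ S', (AtomGraph (n + 1)).Adj w x) → S.card + d ≤ n + 1 := by
  induction n with
  | zero =>
    intro v S d _ hne hS
    obtain ⟨w, hw⟩ := hne
    exact absurd (hS w hw).1 (by intro h; exact h)
  | succ n ih =>
    intro v S d hd hne hS
    by_cases hd1 : d = 1
    · have := atom_deg (n + 1) v S (fun w hw => (hS w hw).1)
      omega
    change Finset (AtomVert (n + 1) ⊕ AtomVert (n + 1)) at S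
    change S.card + d ≤ n + 1 + 1
    rcases v with a | a
    · obtain ⟨h1, h2⟩ := card_inl_nbrs (AtomGraph (n + 1)) a S (fun w hw => (hS w hw).1)
      have hR : S.toRight = ∅ := by
        rw [Finset.eq_empty_iff_forall_notMem]
        intro b hb
        rw [Finset.mem_toRight] at hb
        obtain ⟨_, S', hS', hx⟩ := hS _ hb
        have := card_inr_nbrs (AtomGraph (n + 1)) b S' hx
        have h3 : d ≤ 1 := le_trans hS' this
        omega
      have hc := S.card_toLeft_add_card_toRight
      rw [hR, Finset.card_empty] at hc
      have hpos : 0 < S.card := Finset.card_pos.2 hne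
      have := ih a S.toLeft (d - 1) (by omega) (Finset.card_pos.1 (by omega)) (by
        intro w hw
        refine ⟨h1 w hw, ?_⟩
        rw [Finset.mem_toLeft] at hw
        obtain ⟨_, S', hS', hx⟩ := hS _ hw
        change Finset (AtomVert (n + 1) ⊕ AtomVert (n + 1)) at S'
        obtain ⟨g1, g2⟩ := card_inl_nbrs (AtomGraph (n + 1)) w S' hx
        have hc' := S'.card_toLeft_add_card_toRight
        change d ≤ S'.card at hS'
        exact ⟨S'.toLeft, by omega, g1⟩)
      omega
    · have h1 := card_inr_nbrs (AtomGraph (n + 1)) a S (fun w hw => (hS w hw).1)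
      obtain ⟨w, hw⟩ := hne
      obtain ⟨_, S', hS', hx⟩ := hS w hw
      have := atom_deg (n + 1) w S' hx
      omega

theorem zcol_upper (n m : ℕ) (c : AtomVert (n + 1) → ℕ)
    (h : IsZColoring (AtomGraph (n + 1)) m c) : m ≤ (n + 1 + 2) / 2 := by
  classical
  by_cases hm : m ≤ 1
  · omega
  obtain ⟨-, -, -, -, u, hu, hadj, hnb⟩ := h
  have hinj : ∀ T : Finset ℕ, ∀ f : ℕ → AtomVert (n + 1), (∀ i ∈ T, c (f i) = i) →
      (T.image f).card = T.card := by
    intro T f hf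
    apply Finset.card_image_of_injOn
    intro x hx y hy hxy
    rw [← hf x hx, ← hf y hy, hxy]
  have hcard : ((Finset.range (m - 1)).image u).card = m - 1 := by
    rw [hinj, Finset.card_range]
    intro i hi
    exact hu i (by have := Finset.mem_range.1 hi; omega)
  have := atom_nbr n (u (m - 1)) ((Finset.range (m - 1)).image u) (m - 1) (by omega)
    (Finset.card_pos.1 (by omega)) (by
      intro w hw
      obtain ⟨j, hj, rfl⟩ := Finset.mem_image.1 hw
      have hj := Finset.mem_range.1 hj
      refine ⟨hadj j hj, ?_⟩
      have : ∀ i, ∃ w, i < m → i ≠ j → (AtomGraph (n + 1)).Adj (u j) w ∧ c w = i := by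
        intro i
        by_cases hi : i < m ∧ i ≠ j
        · obtain ⟨w, hw⟩ := hnb i hi.1 j (by omega) hi.2
          exact ⟨w, fun _ _ => hw⟩
        · exact ⟨u j, fun h1 h2 => absurd ⟨h1, h2⟩ hi⟩
      choose f hf using this
      refine ⟨((Finset.range m).erase j).image f, ?_, ?_⟩
      · rw [hinj, Finset.card_erase_of_mem (Finset.mem_range.2 (by omega)), Finset.card_range]
        intro i hi
        rw [Finset.mem_erase, Finset.mem_range] at hi
        exact (hf i hi.2 hi.1).2
      · intro x hx
        obtain ⟨i, hi, rfl⟩ := Finset.mem_image.1 hx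
        rw [Finset.mem_erase, Finset.mem_range] at hi
        exact (hf i hi.2 hi.1).1)
  omega

/-- color of a new leaf of order `t` attached to a vertex of color `p`. -/
def leafCol (M t p : ℕ) : ℕ :=
  if p = M ∧ M ≤ t ∧ t + 1 < 2 * M then t - M
  else if t < M ∧ t ≠ p then t else if p = 0 then 1 else 0

/-- order of the child of the root that gets color `j`. -/
def slot (M j : ℕ) : ℕ := if j + 1 < M then M + j else j

theorem zcol_inv (K M : ℕ) (hK : K = 2 * M ∨ K = 2 * M + 1) (n : ℕ) :
    ∀ r, n + 1 + r = K → ∃ (c : AtomVert (n + 1) → ℕ) (ρ : AtomVert (n + 1)),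
      (∀ v, c v ≤ M) ∧
      (∀ x y, (AtomGraph (n + 1)).Adj x y → c x ≠ c y) ∧
      (∀ v i, i < c v → (∃ w, (AtomGraph (n + 1)).Adj v w ∧ c w = i) ∨ i < r) ∧
      c ρ = M ∧
      (∀ j, j < M → (∃ u, (AtomGraph (n + 1)).Adj ρ u ∧ c u = j ∧
        ∀ i, i < M → i ≠ j → (∃ w, (AtomGraph (n + 1)).Adj u w ∧ c w = i) ∨ i < r)
        ∨ slot M j < r) := by
  induction n with
  | zero =>
    intro r hr
    refine ⟨fun _ => M, PUnit.unit, fun _ => le_rfl, fun x y h => absurd h (fun h => h), ?_, rfl, ?_⟩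
    · intro v i hi
      right
      change i < M at hi
      omega
    · intro j hj
      right
      unfold slot
      split_ifs <;> omega
  | succ n ih =>
    intro r hr
    obtain ⟨c, ρ, h1, h2, h3, h4, h5⟩ := ih (r + 1) (by omega)
    have q1 : ∀ p, p ≤ M → leafCol M r p ≤ M := by
      intro p hp; unfold leafCol; split_ifs <;> omega
    have q2 : ∀ p, p ≤ M → leafCol M r p ≠ p := by
      intro p hp; unfold leafCol; split_ifs <;> omega
    have q3 : ∀ p, leafCol M r p ≤ r ∨ (leafCol M r p = 1 ∧ p = 0) := by
      intro p; unfold leafCol; split_ifs <;> omega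
    have q4 : ∀ p, r < M → r ≠ p → leafCol M r p = r := by
      intro p _ _; unfold leafCol; split_ifs <;> omega
    let c' : AtomVert (n + 1) ⊕ AtomVert (n + 1) → ℕ :=
      Sum.elim c (fun a => leafCol M r (c a))
    have ext : ∀ a i, i < M → i ≠ c a →
        ((∃ w, (AtomGraph (n + 1)).Adj a w ∧ c w = i) ∨ i < r + 1) →
        (∃ w, (pendantExtend (AtomGraph (n + 1))).Adj (Sum.inl a) w ∧ c' w = i) ∨ i < r := by
      intro a i hi hia h
      rcases h with ⟨w, hw, hc⟩ | h
      · exact Or.inl ⟨Sum.inl w, (pe_ll _ _ _).2 hw, hc⟩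
      · by_cases hir : i < r
        · exact Or.inr hir
        · have : i = r := by omega
          subst this
          exact Or.inl ⟨Sum.inr a, (pe_lr _ _ _).2 rfl, q4 _ hi hia⟩
    refine ⟨c', Sum.inl ρ, ?_, ?_, ?_, h4, ?_⟩
    · rintro (a | a)
      · exact h1 a
      · exact q1 _ (h1 a)
    · rintro (a | a) (b | b) h
      · exact h2 a b ((pe_ll _ _ _).1 h)
      · have := (pe_lr _ _ _).1 h
        subst this
        exact (q2 _ (h1 _)).symm
      · have := (pe_rl _ _ _).1 h
        subst this
        exact q2 _ (h1 _)
      · exact absurd h (pe_rr _ a b)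
    · rintro (a | a) i hi
      · change i < c a at hi
        have := h1 a
        exact ext a i (by omega) (by omega) (h3 a i hi)
      · change i < leafCol M r (c a) at hi
        rcases q3 (c a) with h | ⟨h, h'⟩
        · right; omega
        · left
          refine ⟨Sum.inl a, (pe_rl _ _ _).2 rfl, ?_⟩
          change c a = i
          omega
    · intro j hj
      rcases h5 j hj with ⟨u, hu, hc, hi⟩ | h
      · left
        refine ⟨Sum.inl u, (pe_ll _ _ _).2 hu, hc, ?_⟩
        intro i hiM hij
        exact ext u i hiM (by omega) (hi i hiM hij)
      · by_cases hs : slot M j < r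
        · exact Or.inr hs
        · left
          have hs : slot M j = r := by omega
          refine ⟨Sum.inr ρ, (pe_lr _ _ _).2 rfl, ?_, ?_⟩
          · change leafCol M r (c ρ) = j
            rw [h4, ← hs]
            unfold leafCol slot
            split_ifs <;> omega
          · intro i hiM hij
            right
            rw [← hs]
            unfold slot
            split_ifs <;> omega

theorem zcol_lower (n : ℕ) :
    ∃ c, IsZColoring (AtomGraph (n + 1)) ((n + 1 + 2) / 2) c := by
  obtain ⟨c, ρ, h1, h2, h3, h4, h5⟩ := zcol_inv (n + 1) ((n + 1) / 2) (by omega) n 0 rfl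
  have e : (n + 1 + 2) / 2 = (n + 1) / 2 + 1 := by omega
  rw [e]
  generalize (n + 1) / 2 = M at *
  have h5' : ∀ j, ∃ u, c u = min j M ∧ (j < M → (AtomGraph (n + 1)).Adj ρ u) ∧
      ∀ i, i ≤ M → j ≤ M → i ≠ j → ∃ w, (AtomGraph (n + 1)).Adj u w ∧ c w = i := by
    intro j
    by_cases hj : j < M
    · rcases h5 j hj with ⟨u, hu, hc, hi⟩ | h
      · refine ⟨u, by omega, fun _ => hu, ?_⟩
        intro i hiM _ hij
        by_cases hh : i = M
        · exact ⟨ρ, hu.symm, by omega⟩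
        · simpa using hi i (by omega) hij
      · omega
    · refine ⟨ρ, by omega, fun h => absurd h hj, ?_⟩
      intro i hiM hjM hij
      simpa using h3 ρ i (by omega)
  choose u hu1 hu2 hu3 using h5'
  have hc : ∀ j, j < M + 1 → c (u j) = j := fun j hj => by rw [hu1]; omega
  refine ⟨c, fun v => by have := h1 v; omega, fun x y h => h2 x y h, fun i hi => ⟨u i, hc i hi⟩,
    fun v i hi => by simpa using h3 v i hi, fun j => if j < M then u j else ρ, ?_, ?_, ?_⟩
  · intro j hj
    dsimp only
    split_ifs
    · exact hc j hj
    · omega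
  · intro j hj
    have hj : j < M := by omega
    simpa [hj] using hu2 j hj
  · intro i hi j hj hij
    dsimp only
    split_ifs
    · exact hu3 j i (by omega) (by omega) hij
    · simpa using h3 ρ i (by omega)

/-- for every `k ≥ 1`, the tree atom `Tₖ` satisfies
`z(Tₖ) = ⌈(k+1)/2⌉` (note that `⌈(k+1)/2⌉ = (k+2)/2` in ℕ-division). -/
theorem zNum_atom (k : ℕ) (hk : 1 ≤ k) :
    zNum (AtomGraph k) = (k + 2) / 2 := by
  obtain ⟨n, rfl⟩ : ∃ n, k = n + 1 := ⟨k - 1, by omega⟩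
  apply IsGreatest.csSup_eq
  refine ⟨zcol_lower n, ?_⟩
  rintro m ⟨c, hc⟩
  exact zcol_upper n m c hc
end

section
/- For all integers k ≥ 1 and t ≥ 1, every vertex of degree at least t in the tree atom T_k has at most k − t neighbors of degree at least t in T_k. -/
open SimpleGraph

universe u v

theorem atomVert_finite : ∀ k, Finite (AtomVert k)
  | 0 => inferInstanceAs (Finite Empty)
  | 1 => inferInstanceAs (Finite PUnit)
  | (k + 2) => by
    haveI := atomVert_finite (k + 1)
    exact inferInstanceAs (Finite (AtomVert (k + 1) ⊕ AtomVert (k + 1)))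

theorem pe_deg_l {W : Type} [Finite W] (G : SimpleGraph W) (a : W) :
    ((pendantExtend G).neighborSet (Sum.inl a)).ncard = (G.neighborSet a).ncard + 1 := by
  have : (pendantExtend G).neighborSet (Sum.inl a)
      = insert (Sum.inr a) (Sum.inl '' G.neighborSet a) := by
    ext x
    rcases x with b | b
    · simp [pe_ll]
    · simp [pe_lr]
  rw [this, Set.ncard_insert_of_notMem (by simp), Set.ncard_image_of_injective _ Sum.inl_injective]

theorem pe_deg_r {W : Type} (G : SimpleGraph W) (a : W) :
    ((pendantExtend G).neighborSet (Sum.inr a)).ncard = 1 := by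
  have : (pendantExtend G).neighborSet (Sum.inr a) = {Sum.inl a} := by
    ext x
    rcases x with b | b
    · simp [SimpleGraph.adj_comm _ (Sum.inr a), pe_lr, eq_comm]
    · simp [pe_rr]
  rw [this, Set.ncard_singleton]

theorem atom_deg_one (v : AtomVert 1) : ((AtomGraph 1).neighborSet v).ncard = 0 := by
  have : (AtomGraph 1).neighborSet v = ∅ := by
    ext x
    simp [AtomGraph]
  rw [this, Set.ncard_empty]

theorem atom_deg_le : ∀ (k : ℕ) (v : AtomVert (k + 1)),
    ((AtomGraph (k + 1)).neighborSet v).ncard ≤ k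
  | 0, v => (atom_deg_one v).le
  | (k + 1), v => by
    haveI := atomVert_finite (k + 1)
    rcases v with a | a
    · exact (pe_deg_l (AtomGraph (k + 1)) a).trans_le (Nat.succ_le_succ (atom_deg_le k a))
    · exact (pe_deg_r (AtomGraph (k + 1)) a).trans_le (by omega)

theorem pe_step {W : Type} [Finite W] (G : SimpleGraph W) (n s : ℕ) (hs : 1 ≤ s)
    (ih : ∀ v : W, s ≤ (G.neighborSet v).ncard →
      {u : W | G.Adj v u ∧ s ≤ (G.neighborSet u).ncard}.ncard ≤ n)
    (v : W ⊕ W) (hv : s + 1 ≤ ((pendantExtend G).neighborSet v).ncard) :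
    {u : W ⊕ W | (pendantExtend G).Adj v u ∧
      s + 1 ≤ ((pendantExtend G).neighborSet u).ncard}.ncard ≤ n := by
  rcases v with a | a
  · rw [pe_deg_l] at hv
    have : {u : W ⊕ W | (pendantExtend G).Adj (Sum.inl a) u ∧
        s + 1 ≤ ((pendantExtend G).neighborSet u).ncard}
        = Sum.inl '' {u : W | G.Adj a u ∧ s ≤ (G.neighborSet u).ncard} := by
      ext x
      rcases x with b | b
      · simp [pe_ll, pe_deg_l]
      · simp [pe_deg_r]
        omega
    rw [this, Set.ncard_image_of_injective _ Sum.inl_injective]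
    exact ih a (by omega)
  · rw [pe_deg_r] at hv
    omega

theorem atom_aux : ∀ (k t : ℕ) (_ : 1 ≤ t) (v : AtomVert (k + 1))
    (_ : t ≤ ((AtomGraph (k + 1)).neighborSet v).ncard),
    {u : AtomVert (k + 1) | (AtomGraph (k + 1)).Adj v u ∧
        t ≤ ((AtomGraph (k + 1)).neighborSet u).ncard}.ncard ≤ k + 1 - t
  | 0, t, ht, v, hv => by
    rw [atom_deg_one] at hv
    omega
  | (k + 1), t, ht, v, hv => by
    haveI := atomVert_finite (k + 1)
    haveI := atomVert_finite (k + 1 + 1)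
    obtain rfl | h2 : t = 1 ∨ 2 ≤ t := by omega
    · refine le_trans (Set.ncard_le_ncard (fun u hu => hu.1) (Set.toFinite _)) 
        (atom_deg_le (k + 1) v)
    · obtain ⟨s, rfl⟩ : ∃ s, t = s + 1 := ⟨t - 1, by omega⟩
      have := pe_step (AtomGraph (k + 1)) (k + 1 - s) s (by omega)
        (fun v hv => atom_aux k s (by omega) v hv) v hv
      rw [Nat.add_sub_add_right]
      exact this

/-- for all `k ≥ 1` and `t ≥ 1`, every vertex of degree at least
`t` in the tree atom `Tₖ` has at most `k - t` neighbors of degree at least `t`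
in `Tₖ` (degrees measured as `Set.ncard` of neighbor sets). -/
theorem atom_neighbors_of_large_degree (k t : ℕ) (hk : 1 ≤ k) (ht : 1 ≤ t)
    (v : AtomVert k) (hv : t ≤ ((AtomGraph k).neighborSet v).ncard) :
    {u : AtomVert k | (AtomGraph k).Adj v u ∧
        t ≤ ((AtomGraph k).neighborSet u).ncard}.ncard ≤ k - t := by
  obtain ⟨n, rfl⟩ : ∃ n, k = n + 1 := ⟨k - 1, by omega⟩
  exact atom_aux n t ht v hv
end

section
/- For every finite tree T (with at least one vertex), Γ(T) ≤ 2·z(T) − 1, where Γ denotes the Grundy number and z the z-chromatic number. -/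
open SimpleGraph

universe u v

theorem exists_parent_aux {V : Type u} (T : SimpleGraph V) (hT : T.IsTree) (r : V) :
    ∃ (par : V → V) (d : V → ℕ), d r = 0 ∧
      (∀ x, x ≠ r → T.Adj (par x) x ∧ d x = d (par x) + 1) ∧
      (∀ x y, T.Adj x y → (par x = y ∧ x ≠ r) ∨ (par y = x ∧ y ≠ r)) := by
  classical
  choose P hP hP' using (hT.existsUnique_path r ·)
  have hr : P r = Walk.nil := (hP' r Walk.nil (by simp)).symm
  have key : ∀ x y, T.Adj x y → x ∈ (P y).support → (P y).penultimate = x ∧ y ≠ r := by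
    intro x y h hx
    have h1 := hT.isAcyclic.path_concat (hP x) (hP y) h hx
    refine ⟨by rw [h1]; simp, ?_⟩
    rintro rfl
    rw [hr] at hx
    simp at hx
    exact h.ne hx
  refine ⟨fun x => (P x).penultimate, fun x => (P x).length, by simp [hr], ?_, ?_⟩
  · intro x hx
    have hn : ¬ (P x).Nil := Walk.not_nil_of_ne (Ne.symm hx)
    have ha : T.Adj (P x).penultimate x := Walk.adj_penultimate hn
    refine ⟨ha, ?_⟩
    have h1 := hT.isAcyclic.path_concat (hP (P x).penultimate) (hP x) ha (by simp)
    have := congrArg Walk.length h1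
    rwa [Walk.length_concat] at this
  · intro x y h
    by_cases hy : x ∈ (P y).support
    · exact Or.inr (key x y h hy)
    · left
      apply key y x h.symm
      exact hT.isAcyclic.mem_support_of_ne_mem_support_of_adj_of_isPath (hP x) (hP y) h hy

theorem exists_rec_aux {V : Type u} {α : Type v} (r : V) (par : V → V) (d : V → ℕ) (h0 : d r = 0)
    (hd : ∀ x, x ≠ r → d x = d (par x) + 1) (a : α) (step : V → α → α) :
    ∃ F : V → α, F r = a ∧ ∀ x, x ≠ r → F x = step x (F (par x)) := by
  let G : ℕ → V → α := fun n => Nat.rec (fun _ => a) (fun _ g x => step x (g (par x))) n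
  refine ⟨fun x => G (d x) x, ?_, ?_⟩
  · simp only [h0]; rfl
  · intro x hx
    simp only [hd x hx]
    rfl

theorem exists_z_aux {V : Type u} (T : SimpleGraph V) (hT : T.IsTree) (m : ℕ) (c : V → ℕ)
    (hm : 2 ≤ m) (hc : IsGrundyColoring T m c) :
    ∃ c', IsZColoring T (m / 2 + 1) c' := by
  classical
  obtain ⟨-, -, hsurj, hgr⟩ := hc
  obtain ⟨r, hr⟩ := hsurj (m - 1) (by omega)
  obtain ⟨q, hq⟩ : ∃ q, q = m / 2 := ⟨_, rfl⟩
  rw [← hq]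
  have hw : ∀ j, ∃ w, j < q → T.Adj r w ∧ c w = if j + 1 = q then j else q + j := by
    intro j
    by_cases hj : j < q
    · obtain ⟨w, h⟩ := hgr r (if j + 1 = q then j else q + j) (by split_ifs <;> omega)
      exact ⟨w, fun _ => h⟩
    · exact ⟨r, fun h => absurd h hj⟩
  choose w hw using hw
  have winj : ∀ i j, i < q → j < q → w i = w j → i = j := by
    intro i j hi hj h
    have h1 := (hw i hi).2
    have h2 := (hw j hj).2
    rw [h, h2] at h1
    split_ifs at h1 <;> omega
  obtain ⟨par, d, hd0, hpar, hadj⟩ := exists_parent_aux T hT r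
  obtain ⟨F, hF0, hF⟩ := exists_rec_aux r par d hd0 (fun x hx => (hpar x hx).2)
    ((q, False) : ℕ × Prop) (fun x s =>
      if par x = r then (if h : ∃ j, j < q ∧ x = w j then (h.choose, True) else (0, False))
      else if s.2 ∧ c x < c (par x) ∧ c x < q ∧ c x ≠ s.1 then (c x, True)
      else (if s.1 = 0 then 1 else 0, False))
  have hwpar : ∀ j, j < q → par (w j) = r ∧ w j ≠ r := by
    intro j hj
    rcases hadj _ _ (hw j hj).1 with h | h
    · exact absurd rfl h.2
    · exact h
  have h0 : (F r).1 = q := by rw [hF0]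
  have h1 : ∀ j, j < q → (F (w j)).1 = j ∧ (F (w j)).2 := by
    intro j hj
    have hex : ∃ i, i < q ∧ w j = w i := ⟨j, hj, rfl⟩
    rw [hF _ (hwpar j hj).2, if_pos (hwpar j hj).1, dif_pos hex]
    exact ⟨(winj _ _ hj hex.choose_spec.1 hex.choose_spec.2).symm, trivial⟩
  have h2 : ∀ x, x ≠ r → par x = r → (∃ j, j < q ∧ x = w j) ∨ ((F x).1 = 0 ∧ ¬ (F x).2) := by
    intro x hx hp
    by_cases hex : ∃ j, j < q ∧ x = w j
    · exact Or.inl hex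
    · right
      rw [hF _ hx, if_pos hp, dif_neg hex]
      simp
  have h3 : ∀ x, x ≠ r → par x ≠ r → (F (par x)).2 → c x < c (par x) → c x < q →
      c x ≠ (F (par x)).1 → (F x).1 = c x ∧ (F x).2 := by
    intro x hx hp a1 a2 a3 a4
    rw [hF _ hx, if_neg hp, if_pos ⟨a1, a2, a3, a4⟩]
    simp
  have h4 : ∀ x, x ≠ r → par x ≠ r →
      ((F (par x)).2 ∧ c x < c (par x) ∧ c x < q ∧ c x ≠ (F (par x)).1 ∧ (F x).1 = c x ∧ (F x).2)
      ∨ ((F x).1 = (if (F (par x)).1 = 0 then 1 else 0) ∧ ¬ (F x).2) := by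
    intro x hx hp
    by_cases h : (F (par x)).2 ∧ c x < c (par x) ∧ c x < q ∧ c x ≠ (F (par x)).1
    · exact Or.inl ⟨h.1, h.2.1, h.2.2.1, h.2.2.2, h3 x hx hp h.1 h.2.1 h.2.2.1 h.2.2.2⟩
    · right
      rw [hF _ hx, if_neg hp, if_neg h]
      simp
  have hq1 : 1 ≤ q := by omega
  clear hF
  -- neighbours of `w j`
  have hwn : ∀ j, j < q → ∀ i, i < q + 1 → i ≠ j → ∃ y, T.Adj (w j) y ∧ (F y).1 = i := by
    intro j hj i hi hij
    by_cases hiq : i = q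
    · exact ⟨r, (hw j hj).1.symm, by rw [h0, hiq]⟩
    have hcw := (hw j hj).2
    have hlt : i < c (w j) := by rw [hcw]; split_ifs <;> omega
    obtain ⟨y, hy, hcy⟩ := hgr (w j) i hlt
    refine ⟨y, hy, ?_⟩
    have hyr : y ≠ r := by
      rintro rfl
      omega
    rcases hadj _ _ hy with h | h
    · exact absurd ((hwpar j hj).1 ▸ h.1).symm hyr
    · rw [(h3 y h.2 (by rw [h.1]; exact (hwpar j hj).2) (by rw [h.1]; exact (h1 j hj).2)
        (by rw [h.1, hcy]; exact hlt) (by omega) (by rw [h.1, (h1 j hj).1, hcy]; exact hij)).1, hcy]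
  have hlt : ∀ x, (F x).1 < q + 1 := by
    intro x
    by_cases hx : x = r
    · rw [hx, h0]; omega
    by_cases hp : par x = r
    · rcases h2 x hx hp with ⟨j, hj, rfl⟩ | h
      · rw [(h1 j hj).1]; omega
      · omega
    · rcases h4 x hx hp with h | h
      · omega
      · rw [h.1]; split_ifs <;> omega
  have hpp : ∀ x, x ≠ r → (F x).1 ≠ (F (par x)).1 := by
    intro x hx
    by_cases hp : par x = r
    · rw [hp, h0]
      rcases h2 x hx hp with ⟨j, hj, rfl⟩ | h
      · rw [(h1 j hj).1]; omega
      · omega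
    · rcases h4 x hx hp with h | h
      · rw [h.2.2.2.2.1]; exact h.2.2.2.1
      · rw [h.1]; split_ifs <;> omega
  refine ⟨fun x => (F x).1, hlt, ?_, ?_, ?_, fun j => if j < q then w j else r, ?_, ?_, ?_⟩
  · intro x y h
    rcases hadj x y h with ⟨h, hx⟩ | ⟨h, hy⟩
    · rw [← h]; exact hpp x hx
    · rw [← h]; exact (hpp y hy).symm
  · intro i hi
    by_cases h : i < q
    · exact ⟨w i, (h1 i h).1⟩
    · exact ⟨r, by simp only [h0]; omega⟩
  · intro x i hi
    simp only at hi
    by_cases hx : x = r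
    · subst hx
      rw [h0] at hi
      exact ⟨w i, (hw i hi).1, (h1 i hi).1⟩
    by_cases hp : par x = r
    · rcases h2 x hx hp with ⟨j, hj, rfl⟩ | h
      · rw [(h1 j hj).1] at hi
        exact hwn j hj i (by omega) (by omega)
      · omega
    · rcases h4 x hx hp with ⟨b1, b2, b3, b4, b5, b6⟩ | h
      · rw [b5] at hi
        obtain ⟨y, hy, hcy⟩ := hgr x i hi
        refine ⟨y, hy, ?_⟩
        rcases hadj _ _ hy with h | h
        · rw [h.1] at b2; omega
        · show (F y).1 = i
          rw [(h3 y h.2 (by rw [h.1]; exact hx) (by rw [h.1]; exact b6) (by rw [h.1]; omega)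
            (by omega) (by rw [h.1, b5]; omega)).1, hcy]
      · refine ⟨par x, (hpar x hx).1.symm, ?_⟩
        show (F (par x)).1 = i
        rw [h.1] at hi
        split_ifs at hi <;> omega
  · intro j hj
    simp only
    split_ifs with h
    · exact (h1 j h).1
    · rw [h0]; omega
  · intro j hj
    have hj' : j < q := by omega
    simp only [Nat.add_sub_cancel, lt_irrefl, if_false, if_pos hj']
    exact (hw j hj').1
  · intro i hi j hj hij
    simp only
    split_ifs with h
    · exact hwn j h i hi hij
    · have : i < q := by omega
      exact ⟨w i, (hw i this).1, (h1 i this).1⟩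

/-- for every finite tree `T` (nonempty, being a tree),
`Γ(T) ≤ 2 · z(T) - 1`. -/
theorem grundy_le_two_z_sub_one {V : Type u} [Fintype V] (T : SimpleGraph V)
    (hT : T.IsTree) :
    grundyNum T ≤ 2 * zNum T - 1 := by
  have hbdd : BddAbove {k | ∃ c : V → ℕ, IsZColoring T k c} := by
    refine ⟨Fintype.card V, ?_⟩
    rintro k ⟨c, hc⟩
    choose f hf using hc.2.2.1
    have hinj : Function.Injective (fun i : Fin k => f i i.2) := by
      intro a b hab
      have h := congrArg c hab
      simp only [hf] at h
      exact Fin.ext h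
    simpa using Fintype.card_le_of_injective _ hinj
  refine csSup_le' ?_
  rintro m ⟨c, hc⟩
  obtain ⟨v⟩ := hT.connected.nonempty
  have hm0 := hc.1 v
  by_cases hm : 2 ≤ m
  · have := le_csSup hbdd (exists_z_aux T hT m c hm hc)
    change m / 2 + 1 ≤ zNum T at this
    omega
  · have hm1 : m = 1 := by omega
    subst hm1
    have h1 : IsZColoring T 1 c := by
      refine ⟨hc.1, hc.2.1, hc.2.2.1, hc.2.2.2, fun _ => v, ?_, ?_, ?_⟩
      · intro j hj; have := hc.1 v; show c v = j; omega
      · intro j hj; omega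
      · intro i hi j hj; omega
    have := le_csSup hbdd ⟨c, h1⟩
    change 1 ≤ zNum T at this
    omega
end

section
/- For every finite graph G with at least one vertex, χ(G) ≤ z(G) ≤ min{Γ(G), b(G)} ≤ Δ(G) + 1, where χ is the chromatic number, z the z-chromatic number, Γ the Grundy number, b the b-chromatic number and Δ the maximum degree. -/
open SimpleGraph

universe u v

theorem aux_deg {V : Type u} [Fintype V] (G : SimpleGraph V) (k : ℕ) (c : V → ℕ) (v : V) (i : ℕ)
    (hi : i < k)
    (h : ∀ j, j < k → j ≠ i → ∃ w, G.Adj v w ∧ c w = j) : k ≤ maxDeg G + 1 := by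
  have h1 : (G.neighborSet v).ncard ≤ maxDeg G := by
    apply le_csSup
    · refine ⟨Fintype.card V, ?_⟩
      rintro d ⟨w, rfl⟩
      rw [← Nat.card_eq_fintype_card]
      exact Set.ncard_le_card _
    · exact ⟨v, rfl⟩
  have h2 : ((Finset.range k).erase i : Finset ℕ).card ≤ (G.neighborSet v).ncard := by
    rw [← Set.ncard_coe_finset]
    refine le_trans (Set.ncard_le_ncard (t := c '' G.neighborSet v) ?_ (Set.toFinite _))
      (Set.ncard_image_le (Set.toFinite _))
    intro j hj
    simp at hj
    obtain ⟨w, hw, hc⟩ := h j hj.1 hj.2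
    exact ⟨w, hw, hc⟩
  rw [Finset.card_erase_of_mem (by simpa using hi), Finset.card_range] at h2
  omega

theorem aux_grundy {V : Type u} [Fintype V] (G : SimpleGraph V) (k : ℕ) (c : V → ℕ)
    (h : IsGrundyColoring G k c) : k ≤ maxDeg G + 1 := by
  rcases Nat.eq_zero_or_pos k with rfl | hk
  · omega
  obtain ⟨v, hv⟩ := h.2.2.1 (k-1) (by omega)
  exact aux_deg G k c v (k-1) (by omega) (fun j hj hne => h.2.2.2 v j (by omega))

theorem aux_b {V : Type u} [Fintype V] (G : SimpleGraph V) (k : ℕ) (c : V → ℕ)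
    (h : IsBColoring G k c) : k ≤ maxDeg G + 1 := by
  rcases Nat.eq_zero_or_pos k with rfl | hk
  · omega
  obtain ⟨v, hv, hb⟩ := h.2.2 0 hk
  exact aux_deg G k c v 0 hk hb

def PropCol {V : Type u} (G : SimpleGraph V) (k : ℕ) (c : V → ℕ) : Prop :=
  (∀ v, c v < k) ∧ (∀ ⦃x y : V⦄, G.Adj x y → c x ≠ c y)

theorem propCol_colorable {V : Type u} (G : SimpleGraph V) (k : ℕ) (c : V → ℕ)
    (h : PropCol G k c) : G.Colorable k :=
  ⟨Coloring.mk (fun v => (⟨c v, h.1 v⟩ : Fin k)) (by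
    intro x y hxy he
    exact h.2 hxy (by simpa using he))⟩

theorem aux_exists_s14 {V : Type u} [Fintype V] [Nonempty V] (G : SimpleGraph V) (k : ℕ)
    (hk : G.Colorable k) (hmin : ∀ m, G.Colorable m → k ≤ m) :
    ∃ c, IsZColoring G k c := by
  classical
  let top : (V → ℕ) → ℕ := fun c => (Finset.univ.filter (fun x => c x = k - 1)).card
  let f : (V → ℕ) → ℕ ×ₗ ℕ := fun c => toLex (top c, ∑ v, c v)
  obtain ⟨C⟩ := hk
  have hne : (f '' {c | PropCol G k c}).Nonempty := by
    refine ⟨_, fun v => (C v : ℕ), ⟨fun v => (C v).2, ?_⟩, rfl⟩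
    intro x y hxy he
    exact C.valid hxy (Fin.ext he)
  obtain ⟨_, ⟨c, hc, rfl⟩, hm⟩ :=
    (wellFounded_lt : WellFounded ((· < ·) : ℕ ×ₗ ℕ → ℕ ×ₗ ℕ → Prop)).has_min _ hne
  have hk0 : 0 < k := by
    obtain ⟨v⟩ := ‹Nonempty V›
    exact lt_of_le_of_lt (Nat.zero_le _) (hc.1 v)
  have hm1 : ∀ c', PropCol G k c' → top c ≤ top c' := by
    intro c' h'
    by_contra hlt
    exact hm _ ⟨c', h', rfl⟩ (Prod.Lex.toLex_lt_toLex.2 (Or.inl (by simpa using hlt)))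
  have hm2 : ∀ c', PropCol G k c' → top c' ≤ top c → ∑ v, c v ≤ ∑ v, c' v := by
    intro c' h' ht
    by_contra hlt
    refine hm _ ⟨c', h', rfl⟩ (Prod.Lex.toLex_lt_toLex.2 (Or.inr ⟨?_, by simpa using hlt⟩))
    exact le_antisymm ht (hm1 c' h')
  have hgr : ∀ v : V, ∀ i, i < c v → ∃ w, G.Adj v w ∧ c w = i := by
    intro v i hi
    by_contra hno
    push Not at hno
    have hcv := hc.1 v
    have := hm2 (Function.update c v i) ⟨?_, ?_⟩ ?_
    · refine absurd this (not_le.2 (Finset.sum_lt_sum ?_ ⟨v, Finset.mem_univ _, by simpa using hi⟩))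
      intro x _
      by_cases hx : x = v
      · subst hx; simpa using hi.le
      · simp [hx]
    · intro x
      by_cases hx : x = v
      · subst hx; simp; omega
      · simpa [hx] using hc.1 x
    · intro x y hxy
      have h1 := hc.2 hxy
      have h2 := hxy.ne
      have h3 := hxy.symm
      by_cases hx : x = v
      · subst hx
        simp [h2.symm]
        exact (hno y hxy).symm
      · by_cases hy : y = v
        · subst hy
          simp [hx]
          exact hno x h3
        · simpa [hx, hy] using h1
    · apply Finset.card_le_card
      intro x
      by_cases hx : x = v
      · subst hx; simp; omega
      · simp [hx]
  have htop : ∃ v, c v = k - 1 := by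
    by_contra hno
    push Not at hno
    have := hmin (k-1) (propCol_colorable G (k-1) c
      ⟨fun v => by have := hc.1 v; have := hno v; omega, hc.2⟩)
    omega
  obtain ⟨v, hv⟩ := htop
  -- key claim
  have key : ∀ j, j < k - 1 → ∃ x, G.Adj v x ∧ c x = j ∧
      ∀ i, i < k → i ≠ j → ∃ w, G.Adj x w ∧ c w = i := by
    intro j hj
    by_contra hno
    push Not at hno
    have hno' : ∀ x, ∃ i, G.Adj v x → c x = j → i < k ∧ i ≠ j ∧ ∀ w, G.Adj x w → c w ≠ i := by
      intro x
      by_cases h1 : G.Adj v x ∧ c x = j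
      · obtain ⟨i, hi⟩ := hno x h1.1 h1.2
        exact ⟨i, fun _ _ => hi⟩
      · exact ⟨0, fun a b => absurd ⟨a, b⟩ h1⟩
    choose m hm' using hno'
    let c' : V → ℕ := fun x => if x = v then j else if G.Adj v x ∧ c x = j then m x else c x
    have e1 : c' v = j := by simp [c']
    have e2 : ∀ x, x ≠ v → G.Adj v x → c x = j → c' x = m x := by
      intro x a b d; simp [c', a, b, d]
    have e3 : ∀ x, x ≠ v → ¬ (G.Adj v x ∧ c x = j) → c' x = c x := by
      intro x a b; simp only [c', if_neg a, if_neg b]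
    have hp : PropCol G k c' := by
      refine ⟨?_, ?_⟩
      · intro x
        have := hc.1 x
        grind
      · intro x y hxy
        have h1 := hc.2 hxy
        have h2 := hxy.ne
        have h3 := hxy.symm
        grind
    have := hm1 c' hp
    refine absurd this (not_le.2 (Finset.card_lt_card ?_))
    refine Finset.ssubset_iff_of_subset ?_ |>.2 ⟨v, by simp [hv], by simp [e1]; omega⟩
    intro x
    simp only [Finset.mem_filter, Finset.mem_univ, true_and]
    intro hx
    by_cases hxv : x = v
    · subst hxv; exact hv
    · by_cases h1 : G.Adj v x ∧ c x = j
      · have := (hm' x h1.1 h1.2).2.2 v h1.1.symm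
        rw [e2 x hxv h1.1 h1.2] at hx
        omega
      · rw [← e3 x hxv h1]; exact hx
  choose! u0 hu1 hu2 hu3 using key
  refine ⟨c, hc.1, hc.2, ?_, hgr, fun j => if j < k - 1 then u0 j else v, ?_, ?_, ?_⟩
  · intro i hi
    by_cases h : i = k - 1
    · exact ⟨v, by omega⟩
    · obtain ⟨w, _, hw⟩ := hgr v i (by omega)
      exact ⟨w, hw⟩
  · intro j hj
    by_cases h : j < k - 1
    · simpa [h] using hu2 j h
    · simp [h]; omega
  · intro j hj
    simpa [hj] using hu1 j hj
  · intro i hi j hj hij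
    by_cases h : j < k - 1
    · simpa [h] using hu3 j h i hi hij
    · simpa [h] using hgr v i (by omega)

/-- for every finite graph `G` with at least one vertex,
`χ(G) ≤ z(G) ≤ min {Γ(G), b(G)} ≤ Δ(G) + 1`. -/
theorem chrom_le_z_le_min_grundy_b_le_maxDeg {V : Type u} [Fintype V]
    [Nonempty V] (G : SimpleGraph V) :
    chromNum G ≤ zNum G ∧ zNum G ≤ min (grundyNum G) (bNum G) ∧
    min (grundyNum G) (bNum G) ≤ maxDeg G + 1 := by
  have bG : BddAbove {k | ∃ c : V → ℕ, IsGrundyColoring G k c} :=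
    ⟨maxDeg G + 1, fun k ⟨c, hc⟩ => aux_grundy G k c hc⟩
  have bB : BddAbove {k | ∃ c : V → ℕ, IsBColoring G k c} :=
    ⟨maxDeg G + 1, fun k ⟨c, hc⟩ => aux_b G k c hc⟩
  have zG : ∀ k c, IsZColoring G k c → IsGrundyColoring G k c :=
    fun k c h => ⟨h.1, h.2.1, h.2.2.1, h.2.2.2.1⟩
  have zB : ∀ k c, IsZColoring G k c → IsBColoring G k c := by
    rintro k c ⟨h1, h2, _, _, u, hu1, _, hu3⟩
    exact ⟨h1, h2, fun i hi => ⟨u i, hu1 i hi, fun j hj hne => hu3 j hj i hi hne⟩⟩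
  refine ⟨?_, le_min ?_ ?_, le_trans (min_le_left _ _) ?_⟩
  · apply le_csSup
    · exact ⟨maxDeg G + 1, fun k ⟨c, hc⟩ => aux_grundy G k c (zG k c hc)⟩
    · exact aux_exists_s14 G (chromNum G)
        (Nat.sInf_mem (s := {k | G.Colorable k}) ⟨_, G.colorable_of_fintype⟩)
        (fun m hm => Nat.sInf_le hm)
  · exact csSup_le' fun k ⟨c, hc⟩ => le_csSup bG ⟨c, zG k c hc⟩
  · exact csSup_le' fun k ⟨c, hc⟩ => le_csSup bB ⟨c, zB k c hc⟩
  · exact csSup_le' fun k ⟨c, hc⟩ => aux_grundy G k c hc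
end
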